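/- Let V be a nontrivial simple cuspidal weight 𝔮-module. Then Q_j v = 0 for all j ∈ ℤ and all v ∈ V, and every weight space of V is at most one-dimensional (so V is a module of the intermediate series over the twisted Heisenberg–Virasoro algebra spanned by the L_m and H_m). -/

import Mathlib

open Submodule

/-- A module over the Lie superalgebra `𝔮` (with even part the twisted
Heisenberg–Virasoro algebra and odd part spanned by the `Q_m`): a `ℤ/2`-graded
complex vector space with parity-preserving operators `L m`, `H m`,
parity-reversing operators `Q m`, and a scalar `c₀` (the action of the central
element `C`), subject to the defining relations. -/
structure QRep (V : Type) [AddCommGroup V] [Module ℂ V] : Type where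
  L : ℤ → V →ₗ[ℂ] V
  H : ℤ → V →ₗ[ℂ] V
  Q : ℤ → V →ₗ[ℂ] V
  c₀ : ℂ
  even : Submodule ℂ V
  odd : Submodule ℂ V
  grading : IsCompl even odd
  L_even : ∀ (m : ℤ), ∀ v ∈ even, L m v ∈ even
  L_odd : ∀ (m : ℤ), ∀ v ∈ odd, L m v ∈ odd
  H_even : ∀ (m : ℤ), ∀ v ∈ even, H m v ∈ even
  H_odd : ∀ (m : ℤ), ∀ v ∈ odd, H m v ∈ odd
  Q_even : ∀ (m : ℤ), ∀ v ∈ even, Q m v ∈ odd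
  Q_odd : ∀ (m : ℤ), ∀ v ∈ odd, Q m v ∈ even
  rel_LL : ∀ (m n : ℤ) (v : V),
    L m (L n v) - L n (L m v) =
      ((n : ℂ) - (m : ℂ)) • L (m + n) v +
        ((1 / 12 : ℂ) * ((n : ℂ) ^ 3 - (n : ℂ)) *
          (if m + n = 0 then (1 : ℂ) else 0) * c₀) • v
  rel_HH : ∀ (m n : ℤ) (v : V),
    H m (H n v) - H n (H m v) =
      ((1 / 3 : ℂ) * (m : ℂ) * (if m + n = 0 then (1 : ℂ) else 0) * c₀) • v
  rel_LH : ∀ (m n : ℤ) (v : V),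
    L m (H n v) - H n (L m v) = (n : ℂ) • H (m + n) v
  rel_LQ : ∀ (m p : ℤ) (v : V),
    L m (Q p v) - Q p (L m v) = ((p : ℂ) - (m : ℂ) / 2) • Q (p + m) v
  rel_HQ : ∀ (m p : ℤ) (v : V),
    H m (Q p v) - Q p (H m v) = Q (m + p) v
  rel_QQ : ∀ (p q : ℤ) (v : V), Q p (Q q v) + Q q (Q p v) = 0

namespace QRep

variable {V : Type} [AddCommGroup V] [Module ℂ V]

/-- The composite operator `Q_{r₁} Q_{r₂} ⋯ Q_{r_k}` applied to a vector, for a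
list `[r₁, r₂, …, r_k]` of indices. -/
def Qcomp (ρ : QRep V) : List ℤ → V → V
  | [], v => v
  | r :: rs, v => ρ.Q r (ρ.Qcomp rs v)

/-- The weight space `V_μ = {v ∈ V : L₀ v = μ v}`. -/
def wt (ρ : QRep V) (μ : ℂ) : Submodule ℂ V :=
  Module.End.eigenspace (ρ.L 0) μ

/-- The parity components, indexed by `ZMod 2`. -/
def parity (ρ : QRep V) (τ : ZMod 2) : Submodule ℂ V :=
  if τ = 0 then ρ.even else ρ.odd

/-- `V` is a weight module: it is the sum of its weight spaces. -/
def IsWeight (ρ : QRep V) : Prop := (⨆ μ : ℂ, ρ.wt μ) = ⊤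

/-- `V` is cuspidal: a weight module with uniformly bounded weight multiplicities
in each parity. -/
def Cuspidal (ρ : QRep V) : Prop :=
  ρ.IsWeight ∧ ∃ p : ℕ, ∀ (μ : ℂ) (τ : ZMod 2),
    Module.rank ℂ ↥(ρ.wt μ ⊓ ρ.parity τ) ≤ (p : Cardinal)

/-- A subspace invariant under all the operators. -/
def IsSubmod (ρ : QRep V) (W : Submodule ℂ V) : Prop :=
  (∀ (m : ℤ), ∀ v ∈ W, ρ.L m v ∈ W) ∧ (∀ (m : ℤ), ∀ v ∈ W, ρ.H m v ∈ W) ∧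
    (∀ (m : ℤ), ∀ v ∈ W, ρ.Q m v ∈ W)

/-- A graded subspace invariant under all the operators. -/
def IsGradedSubmod (ρ : QRep V) (W : Submodule ℂ V) : Prop :=
  ρ.IsSubmod W ∧ W = (W ⊓ ρ.even) ⊔ (W ⊓ ρ.odd)

/-- The trivial representation: all operators act by zero. -/
def IsTrivialRep (ρ : QRep V) : Prop :=
  ∀ (m : ℤ) (v : V), ρ.L m v = 0 ∧ ρ.H m v = 0 ∧ ρ.Q m v = 0

/-- `V` is simple: nontrivial, and its only graded submodules are `⊥` and `⊤`. -/
def IsSimple (ρ : QRep V) : Prop :=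
  ¬ ρ.IsTrivialRep ∧
    ∀ W : Submodule ℂ V, ρ.IsGradedSubmod W → W = ⊥ ∨ W = ⊤

end QRep

/-!
A nontrivial simple weight module has infinitely many weights in one direction, and up to the twist
`n ↦ -n` they go downwards. Bounded multiplicities then make `L_{-1}` bijective between the weight
spaces far down one coset of weights, on all of which `H_0` has the same eigenvalues. Since `Q_k`
raises the eigenvalues of `H_0` by `1`, an eigenvector with a maximal one is annihilated by `Q_k`
for all sufficiently negative `k`, and simplicity gives `Q = 0`.

Now `H_0` is a scalar `F`. Let `x_n` be `H_n` or `L_{n-1}`, let `v` be a weight vector far down, and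
consider the formal series `S_v = ∑ (-1)^n / n! x_n L_{-1}^n v X^n`. Modulo `1 - X`, the operators
`L_1 L_{-1}`, `L_2 L_{-1}^2` and `H_1 L_{-1}` act on the `S_v` as polynomials in the single operator
`(1 - X) X d/dX`. By Nakayama's lemma over `ℂ[X]` the reduction modulo `1 - X` is not zero, so these
three operators have a common eigenvector, with eigenvalues as in a module of the intermediate
series. Moving it by `L_{-1}` gives a ray `v_j`, `j → -∞`, on which the algebra acts as on tensor
densities.

By simplicity `L_k w` and `H_k w` lie on this ray for every weight vector `w` and all sufficiently
negative `k`. A functional equation in `k` determines their coefficients up to a common scalar, and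
`w = 0` if these vanish for `k` near `-∞`. Hence the weight spaces are at most one-dimensional.
-/

open Filter Polynomial

namespace QRep

variable {V : Type} [AddCommGroup V] [Module ℂ V]

section Relations

variable (ρ : QRep V)

theorem L_L_apply {m n : ℤ} (h : m + n ≠ 0) (v : V) :
    ρ.L m (ρ.L n v) = ρ.L n (ρ.L m v) + ((n : ℂ) - m) • ρ.L (m + n) v := by
  rw [← sub_eq_iff_eq_add', ρ.rel_LL, if_neg h]
  simp

theorem L_zero_L_apply (n : ℤ) (v : V) : ρ.L 0 (ρ.L n v) = ρ.L n (ρ.L 0 v) + (n : ℂ) • ρ.L n v := by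
  rcases eq_or_ne n 0 with rfl | h
  · simp
  · simpa using ρ.L_L_apply (m := 0) (by simpa using h) v

theorem L_H_apply (m n : ℤ) (v : V) :
    ρ.L m (ρ.H n v) = ρ.H n (ρ.L m v) + (n : ℂ) • ρ.H (m + n) v := by
  rw [← sub_eq_iff_eq_add', ρ.rel_LH]

theorem H_L_apply (m n : ℤ) (v : V) :
    ρ.H n (ρ.L m v) = ρ.L m (ρ.H n v) - (n : ℂ) • ρ.H (m + n) v := by
  rw [L_H_apply, add_sub_cancel_right]

theorem H_H_apply {m n : ℤ} (h : m + n ≠ 0) (v : V) : ρ.H m (ρ.H n v) = ρ.H n (ρ.H m v) := by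
  rw [← sub_eq_zero, ρ.rel_HH, if_neg h]
  simp

theorem H_zero_L_apply (m : ℤ) (v : V) : ρ.H 0 (ρ.L m v) = ρ.L m (ρ.H 0 v) := by
  simp [H_L_apply]

theorem H_zero_H_apply (m : ℤ) (v : V) : ρ.H 0 (ρ.H m v) = ρ.H m (ρ.H 0 v) := by
  rw [← sub_eq_zero, ρ.rel_HH]
  simp

theorem L_Q_apply (m n : ℤ) (v : V) :
    ρ.L m (ρ.Q n v) = ρ.Q n (ρ.L m v) + ((n : ℂ) - m / 2) • ρ.Q (n + m) v := by
  rw [← sub_eq_iff_eq_add', ρ.rel_LQ]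

theorem Q_L_apply (m n : ℤ) (v : V) :
    ρ.Q n (ρ.L m v) = ρ.L m (ρ.Q n v) - ((n : ℂ) - m / 2) • ρ.Q (n + m) v := by
  rw [L_Q_apply, add_sub_cancel_right]

theorem H_Q_apply (m n : ℤ) (v : V) : ρ.H m (ρ.Q n v) = ρ.Q n (ρ.H m v) + ρ.Q (m + n) v := by
  rw [← sub_eq_iff_eq_add', ρ.rel_HQ]

theorem Q_H_apply (m n : ℤ) (v : V) : ρ.Q n (ρ.H m v) = ρ.H m (ρ.Q n v) - ρ.Q (m + n) v := by
  rw [H_Q_apply, add_sub_cancel_right]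

theorem Q_Q_apply (m n : ℤ) (v : V) : ρ.Q m (ρ.Q n v) = -ρ.Q n (ρ.Q m v) :=
  eq_neg_of_add_eq_zero_left (ρ.rel_QQ m n v)

end Relations

section WeightSpaces

variable {ρ : QRep V} {μ τ : ℂ} {v : V}

theorem mem_wt : v ∈ ρ.wt μ ↔ ρ.L 0 v = μ • v :=
  Module.End.mem_eigenspace_iff

theorem L_mem_wt (hv : v ∈ ρ.wt μ) (k : ℤ) (h : μ + k = τ) : ρ.L k v ∈ ρ.wt τ := by
  rw [mem_wt] at *
  rw [L_zero_L_apply, hv, map_smul, ← h, add_smul]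

theorem H_mem_wt (hv : v ∈ ρ.wt μ) (k : ℤ) (h : μ + k = τ) : ρ.H k v ∈ ρ.wt τ := by
  rw [mem_wt] at *
  rw [L_H_apply, hv, map_smul, zero_add, ← h, add_smul]

theorem Q_mem_wt (hv : v ∈ ρ.wt μ) (k : ℤ) (h : μ + k = τ) : ρ.Q k v ∈ ρ.wt τ := by
  rw [mem_wt] at *
  rw [L_Q_apply, hv, map_smul, ← h, add_smul]
  simp

theorem L_L_neg_sub (hv : v ∈ ρ.wt μ) (k : ℤ) :
    ρ.L k (ρ.L (-k) v) - ρ.L (-k) (ρ.L k v) =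
      (-2 * k * μ + (k - k ^ 3) / 12 * ρ.c₀) • v := by
  rw [ρ.rel_LL, if_pos (add_neg_cancel k), add_neg_cancel, mem_wt.mp hv]
  push_cast
  module

theorem IsWeight.eq_top_of_forall_wt_le (h : ρ.IsWeight) {W : Submodule ℂ V}
    (hW : ∀ μ, ρ.wt μ ≤ W) : W = ⊤ :=
  top_le_iff.mp (h ▸ iSup_le hW)

end WeightSpaces

section ParityInvolution

variable (ρ : QRep V)

/-- The parity involution, equal to `1` on the even and `-1` on the odd part. A subspace is graded
if and only if it is stable under this operator. -/
noncomputable def parityInvolution : V →ₗ[ℂ] V :=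
  LinearMap.ofIsCompl ρ.grading ρ.even.subtype (-ρ.odd.subtype)

variable {ρ} {v : V}

theorem parityInvolution_of_mem_even (hv : v ∈ ρ.even) : ρ.parityInvolution v = v := by
  simpa [parityInvolution] using LinearMap.ofIsCompl_apply_left ρ.grading (φ := ρ.even.subtype)
    (ψ := -ρ.odd.subtype) ⟨v, hv⟩

theorem parityInvolution_of_mem_odd (hv : v ∈ ρ.odd) : ρ.parityInvolution v = -v := by
  simpa [parityInvolution] using LinearMap.ofIsCompl_apply_right ρ.grading (φ := ρ.even.subtype)
    (ψ := -ρ.odd.subtype) ⟨v, hv⟩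

variable (ρ) (k : ℤ) (v)

theorem exists_even_add_odd : ∃ a ∈ ρ.even, ∃ b ∈ ρ.odd, a + b = v :=
  Submodule.mem_sup.mp (ρ.grading.sup_eq_top ▸ Submodule.mem_top)

theorem L_parityInvolution : ρ.L k (ρ.parityInvolution v) = ρ.parityInvolution (ρ.L k v) := by
  obtain ⟨a, ha, b, hb, rfl⟩ := ρ.exists_even_add_odd v
  simp only [map_add, map_neg, parityInvolution_of_mem_even ha, parityInvolution_of_mem_odd hb,
    parityInvolution_of_mem_even (ρ.L_even k a ha), parityInvolution_of_mem_odd (ρ.L_odd k b hb)]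

theorem H_parityInvolution : ρ.H k (ρ.parityInvolution v) = ρ.parityInvolution (ρ.H k v) := by
  obtain ⟨a, ha, b, hb, rfl⟩ := ρ.exists_even_add_odd v
  simp only [map_add, map_neg, parityInvolution_of_mem_even ha, parityInvolution_of_mem_odd hb,
    parityInvolution_of_mem_even (ρ.H_even k a ha), parityInvolution_of_mem_odd (ρ.H_odd k b hb)]

theorem Q_parityInvolution : ρ.Q k (ρ.parityInvolution v) = -ρ.parityInvolution (ρ.Q k v) := by
  obtain ⟨a, ha, b, hb, rfl⟩ := ρ.exists_even_add_odd v
  simp only [map_add, map_neg, parityInvolution_of_mem_even ha, parityInvolution_of_mem_odd hb,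
    parityInvolution_of_mem_even (ρ.Q_odd k b hb), parityInvolution_of_mem_odd (ρ.Q_even k a ha)]
  abel

variable {ρ v}

theorem parityInvolution_mem_wt {μ : ℂ} (hv : v ∈ ρ.wt μ) : ρ.parityInvolution v ∈ ρ.wt μ := by
  rw [mem_wt] at *
  rw [L_parityInvolution, hv, map_smul]

theorem eq_inf_even_sup_inf_odd {W : Submodule ℂ V} (hW : ∀ v ∈ W, ρ.parityInvolution v ∈ W) :
    W = (W ⊓ ρ.even) ⊔ (W ⊓ ρ.odd) := by
  refine le_antisymm (fun v hv => ?_) (sup_le inf_le_left inf_le_left)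
  obtain ⟨a, ha, b, hb, rfl⟩ := ρ.exists_even_add_odd v
  have hab : a - b ∈ W := by
    simpa [parityInvolution_of_mem_even ha, parityInvolution_of_mem_odd hb, sub_eq_add_neg]
      using hW _ hv
  have haW : a ∈ W := by
    convert W.smul_mem (1 / 2 : ℂ) (W.add_mem hv hab) using 1
    module
  exact Submodule.add_mem_sup ⟨haW, ha⟩ ⟨(W.add_mem_iff_right haW).mp hv, hb⟩

theorem IsSimple.eq_bot_or_eq_top (hρ : ρ.IsSimple) {W : Submodule ℂ V} (hW : ρ.IsSubmod W)
    (hpar : ∀ v ∈ W, ρ.parityInvolution v ∈ W) : W = ⊥ ∨ W = ⊤ :=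
  hρ.2 W ⟨hW, eq_inf_even_sup_inf_odd hpar⟩

theorem Cuspidal.exists_finrank_wt_le (hρ : ρ.Cuspidal) :
    ∃ d : ℕ, ∀ μ, FiniteDimensional ℂ (ρ.wt μ) ∧ Module.finrank ℂ (ρ.wt μ) ≤ d := by
  obtain ⟨-, p, hp⟩ := hρ
  refine ⟨p + p, fun μ => ?_⟩
  have hrank : Module.rank ℂ (ρ.wt μ) ≤ ((p + p : ℕ) : Cardinal) := by
    rw [eq_inf_even_sup_inf_odd fun v (hv : v ∈ ρ.wt μ) => parityInvolution_mem_wt hv,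
      Nat.cast_add]
    exact (Submodule.rank_add_le_rank_add_rank _ _).trans
      (add_le_add (hp μ 0) (hp μ 1))
  have hfin : FiniteDimensional ℂ (ρ.wt μ) :=
    Module.rank_lt_aleph0_iff.mp (hrank.trans_lt Cardinal.natCast_lt_aleph0)
  rw [← Module.finrank_eq_rank] at hrank
  exact ⟨hfin, by exact_mod_cast hrank⟩

theorem Cuspidal.finiteDimensional_wt (hρ : ρ.Cuspidal) (μ : ℂ) : FiniteDimensional ℂ (ρ.wt μ) :=
  (hρ.exists_finrank_wt_le.choose_spec μ).1

end ParityInvolution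

section Flip

/-- The twist of a representation by the automorphism `L_n ↦ -L_{-n}`, `H_n ↦ H_{-n}`,
`Q_n ↦ Q_{-n}`, `C ↦ -C`, which reverses the sign of the weights. -/
noncomputable def flip (ρ : QRep V) : QRep V where
  L n := -ρ.L (-n)
  H n := ρ.H (-n)
  Q n := ρ.Q (-n)
  c₀ := -ρ.c₀
  even := ρ.even
  odd := ρ.odd
  grading := ρ.grading
  L_even _ v hv := ρ.even.neg_mem (ρ.L_even _ v hv)
  L_odd _ v hv := ρ.odd.neg_mem (ρ.L_odd _ v hv)
  H_even _ v hv := ρ.H_even _ v hv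
  H_odd _ v hv := ρ.H_odd _ v hv
  Q_even _ v hv := ρ.Q_even _ v hv
  Q_odd _ v hv := ρ.Q_odd _ v hv
  rel_LL m n v := by
    simp only [LinearMap.neg_apply, map_neg, neg_neg, ρ.rel_LL, ← neg_add, neg_eq_zero]
    push_cast
    module
  rel_HH m n v := by
    simp only [ρ.rel_HH, ← neg_add, neg_eq_zero]
    push_cast
    module
  rel_LH m n v := by
    simp only [LinearMap.neg_apply, map_neg, L_H_apply, neg_add]
    push_cast
    module
  rel_LQ m n v := by
    simp only [LinearMap.neg_apply, map_neg, L_Q_apply, neg_add]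
    push_cast
    module
  rel_HQ m n v := by rw [ρ.rel_HQ, neg_add]
  rel_QQ m n v := ρ.rel_QQ _ _ v

variable {ρ : QRep V}

theorem flip_wt (μ : ℂ) : ρ.flip.wt μ = ρ.wt (-μ) := by
  ext v
  simp [mem_wt, flip, neg_eq_iff_eq_neg]

theorem IsSimple.flip (hρ : ρ.IsSimple) : ρ.flip.IsSimple := by
  refine ⟨fun h => hρ.1 fun m v => ?_, fun W hW => hρ.2 W ?_⟩
  · simpa [QRep.flip] using h (-m) v
  · obtain ⟨⟨hL, hH, hQ⟩, hgr⟩ := hW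
    refine ⟨⟨fun m v hv => ?_, fun m v hv => ?_, fun m v hv => ?_⟩, hgr⟩
    · simpa [QRep.flip] using hL (-m) v hv
    · simpa [QRep.flip] using hH (-m) v hv
    · simpa [QRep.flip] using hQ (-m) v hv

theorem Cuspidal.flip (hρ : ρ.Cuspidal) : ρ.flip.Cuspidal := by
  obtain ⟨hwt, p, hp⟩ := hρ
  refine ⟨?_, p, fun μ τ => (flip_wt (ρ := ρ) μ).symm ▸ hp (-μ) τ⟩
  simp only [IsWeight, flip_wt]
  exact ((Equiv.neg ℂ).iSup_comp (g := ρ.wt)).trans hwt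

end Flip

section InfinitelyManyWeights

variable {ρ : QRep V} {μ : ℂ} {v : V}

theorem weight_eq_zero_of_eventually_L_eq_zero (hv : v ∈ ρ.wt μ) (hv0 : v ≠ 0)
    (h : ∀ᶠ k : ℕ in atTop, ρ.L k v = 0 ∧ ρ.L (-k) v = 0) : μ = 0 := by
  have hbracket : ∀ᶠ k : ℕ in atTop, -2 * k * μ + (k - k ^ 3) / 12 * ρ.c₀ = 0 := by
    filter_upwards [h] with k hk
    have := L_L_neg_sub hv k
    rw [hk.1, hk.2, map_zero, map_zero, sub_zero] at this
    exact_mod_cast (smul_eq_zero.mp this.symm).resolve_right hv0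
  obtain ⟨r, hr⟩ := eventually_atTop.mp hbracket
  have h1 := hr (r + 1) (by omega)
  have h2 := hr (2 * (r + 1)) (by omega)
  have hr0 : ((r + 1 : ℕ) : ℂ) ≠ 0 := Nat.cast_ne_zero.mpr r.succ_ne_zero
  rw [Nat.cast_mul] at h2
  generalize ((r + 1 : ℕ) : ℂ) = x at *
  push_cast at h2
  have hc : x ^ 3 * ρ.c₀ = 0 := by linear_combination (-2) * h2 + 4 * h1
  have hμ : x * μ = 0 := by
    rw [(mul_eq_zero.mp hc).resolve_left (pow_ne_zero _ hr0)] at h1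
    linear_combination (-1 / 2) * h1
  exact (mul_eq_zero.mp hμ).resolve_left hr0

theorem isTrivialRep_of_wt_zero_eq_top (h0 : ρ.wt 0 = ⊤) (h : ∀ μ ≠ 0, ρ.wt μ = ⊥) :
    ρ.IsTrivialRep := by
  have hmem : ∀ v, v ∈ ρ.wt 0 := fun v => h0 ▸ Submodule.mem_top
  have hwt : ∀ {m : ℤ} {v : V}, m ≠ 0 → v ∈ ρ.wt m → v = 0 := fun hm hv =>
    (Submodule.mem_bot ℂ).mp (h _ (Int.cast_ne_zero.mpr hm) ▸ hv)
  have hL : ∀ m v, ρ.L m v = 0 := fun m v => by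
    rcases eq_or_ne m 0 with rfl | hm
    · simpa using mem_wt.mp (hmem v)
    · exact hwt hm (L_mem_wt (hmem v) m (zero_add _))
  have hH : ∀ m v, ρ.H m v = 0 := fun m v => by
    rcases eq_or_ne m 0 with rfl | hm
    · simpa [hL] using ρ.rel_LH 1 (-1) v
    · exact hwt hm (H_mem_wt (hmem v) m (zero_add _))
  exact fun m v => ⟨hL m v, hH m v, by simpa [hH] using (ρ.rel_HQ 0 m v).symm⟩

theorem exists_infinite_wt_ne_bot (hρ : ρ.IsSimple) (hwt : ρ.IsWeight) :
    ∃ μ, {n : ℕ | ρ.wt (μ - n) ≠ ⊥}.Infinite ∨ {n : ℕ | ρ.wt (μ + n) ≠ ⊥}.Infinite := by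
  by_contra! hfin
  have hbot : ∀ μ ≠ 0, ρ.wt μ = ⊥ := fun μ hμ => by
    refine (Submodule.eq_bot_iff _).mpr fun v hv => by_contra fun hv0 =>
      hμ (weight_eq_zero_of_eventually_L_eq_zero hv hv0 ?_)
    have hsub := (hfin μ).1.eventually_cofinite_notMem
    have hadd := (hfin μ).2.eventually_cofinite_notMem
    rw [Nat.cofinite_eq_atTop] at hsub hadd
    filter_upwards [hsub, hadd] with k hk hk'
    simp only [ne_eq, not_not] at hk hk'
    constructor
    · simpa [hk'] using L_mem_wt hv k (τ := μ + k) (by simp)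
    · simpa [hk] using L_mem_wt hv (-k) (τ := μ - k) (by simp [sub_eq_add_neg])
  refine hρ.1 (isTrivialRep_of_wt_zero_eq_top (hwt.eq_top_of_forall_wt_le fun μ => ?_) hbot)
  rcases eq_or_ne μ 0 with rfl | hμ
  · exact le_rfl
  · exact hbot μ hμ ▸ bot_le

end InfinitelyManyWeights

section Tail

/-- The operator `L_{-1} ^ n`, which identifies the weight spaces of weights `ν` and `ν - n` when
`ν` is the top of a tail. -/
def D (ρ : QRep V) (n : ℕ) : V →ₗ[ℂ] V :=
  ρ.L (-1) ^ n

/-- `ν` is the top of a tail of weights: `L_{-1}` is bijective between consecutive weight spaces of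
weights `ν, ν - 1, ν - 2, …`, and these are nonzero. -/
structure IsTail (ρ : QRep V) (ν : ℂ) : Prop where
  wt_ne_bot : ρ.wt ν ≠ ⊥
  injective : ∀ n : ℕ, ∀ v ∈ ρ.wt (ν - n), ρ.L (-1) v = 0 → v = 0
  surjective : ∀ n : ℕ, ∀ w ∈ ρ.wt (ν - (n + 1 : ℕ)), ∃ v ∈ ρ.wt (ν - n), ρ.L (-1) v = w

variable {ρ : QRep V} {μ ν τ : ℂ} {v w : V} {n : ℕ}

@[simp]
theorem D_zero_apply (v : V) : ρ.D 0 v = v :=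
  rfl

theorem D_succ_apply (n : ℕ) (v : V) : ρ.D (n + 1) v = ρ.L (-1) (ρ.D n v) := by
  rw [D, pow_succ', Module.End.mul_apply, D]

theorem D_mem_wt (hv : v ∈ ρ.wt μ) (n : ℕ) (h : μ - n = τ) : ρ.D n v ∈ ρ.wt τ := by
  induction n generalizing τ with
  | zero => simpa [← h] using hv
  | succ n ih =>
    rw [D_succ_apply]
    exact L_mem_wt (ih rfl) (-1) (by rw [← h]; push_cast; ring)

theorem L_one_pow_mem_wt (hv : v ∈ ρ.wt μ) (n : ℕ) (h : μ + n = τ) : (ρ.L 1 ^ n) v ∈ ρ.wt τ := by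
  induction n generalizing τ with
  | zero => simpa [← h] using hv
  | succ n ih =>
    rw [pow_succ', Module.End.mul_apply]
    exact L_mem_wt (ih rfl) 1 (by rw [← h]; push_cast; ring)

theorem L_neg_one_L_one_pow_succ (hv : v ∈ ρ.wt τ) (h : ρ.L (-1) v = 0) (k : ℕ) :
    ρ.L (-1) ((ρ.L 1 ^ (k + 1)) v) = ((k + 1) * (2 * τ + k) : ℂ) • (ρ.L 1 ^ k) v := by
  have hbracket : ∀ {σ : ℂ} {w : V}, w ∈ ρ.wt σ →
      ρ.L (-1) (ρ.L 1 w) = ρ.L 1 (ρ.L (-1) w) + (2 * σ) • w := fun hw => by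
    rw [← sub_eq_iff_eq_add', ← neg_sub, L_L_neg_sub hw 1]
    push_cast
    module
  induction k with
  | zero => simp [hbracket hv, h]
  | succ k ih =>
    rw [pow_succ', Module.End.mul_apply, hbracket (L_one_pow_mem_wt hv (k + 1) rfl), ih, map_smul,
      ← Module.End.mul_apply, ← pow_succ']
    push_cast
    module

theorem D_L_one_pow (hv : v ∈ ρ.wt τ) (h : ρ.L (-1) v = 0) (k : ℕ) :
    ρ.D k ((ρ.L 1 ^ k) v) = (∏ j ∈ Finset.range k, ((j + 1) * (2 * τ + j) : ℂ)) • v := by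
  induction k with
  | zero => simp
  | succ k ih =>
    rw [D, pow_succ, Module.End.mul_apply, L_neg_one_L_one_pow_succ hv h, map_smul, ← D, ih,
      smul_smul, Finset.prod_range_succ, mul_comm]

theorem eventually_L_neg_one_injOn (hfin : ∀ μ, FiniteDimensional ℂ (ρ.wt μ)) (μ : ℂ) :
    ∀ᶠ n : ℕ in atTop, ∀ v ∈ ρ.wt (μ - n), ρ.L (-1) v = 0 → v = 0 := by
  obtain ⟨a, ha⟩ := exists_nat_gt (2 * μ.re)
  have := hfin (μ - a)
  obtain ⟨b, hb⟩ := monotone_stabilizes_iff_noetherian.mpr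
    (inferInstanceAs (IsNoetherian ℂ (ρ.wt (μ - a))))
    (OrderHom.comp ⟨Submodule.comap (ρ.wt (μ - a)).subtype, fun _ _ => Submodule.comap_mono⟩
      (ρ.L (-1)).iterateKer)
  filter_upwards [eventually_ge_atTop (a + b)] with n hn v hv h0
  obtain ⟨k, rfl⟩ := Nat.exists_eq_add_of_le (show a ≤ n by omega)
  have hw : (ρ.L 1 ^ k) v ∈ ρ.wt (μ - a) := L_one_pow_mem_wt hv k (by push_cast; ring)
  have hDk := D_L_one_pow hv h0 k
  have hDw : ρ.D (k + 1) ((ρ.L 1 ^ k) v) = 0 := by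
    rw [D_succ_apply, hDk, map_smul, h0, smul_zero]
  have hker : ρ.D k ((ρ.L 1 ^ k) v) = 0 := by
    have := (hb k (by omega)).symm.trans (hb (k + 1) (by omega))
    exact (SetLike.ext_iff.mp this ⟨_, hw⟩).mpr hDw
  refine (smul_eq_zero.mp (hDk ▸ hker)).resolve_left (Finset.prod_ne_zero_iff.mpr fun j hj =>
    mul_ne_zero (Nat.cast_add_one_ne_zero j) fun h => ?_)
  have hre := congrArg Complex.re h
  have hjk : (j : ℝ) < k := by exact_mod_cast Finset.mem_range.mp hj
  simp at hre
  linarith [(Nat.cast_nonneg a : (0 : ℝ) ≤ a)]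

theorem Cuspidal.exists_isTail (hρ : ρ.Cuspidal) (hinf : {n : ℕ | ρ.wt (μ - n) ≠ ⊥}.Infinite) :
    ∃ ν, ρ.IsTail ν := by
  obtain ⟨d, hd⟩ := hρ.exists_finrank_wt_le
  obtain ⟨a, ha⟩ := eventually_atTop.mp (eventually_L_neg_one_injOn hρ.finiteDimensional_wt μ)
  have := hρ.finiteDimensional_wt
  let T : ∀ n : ℕ, ρ.wt (μ - n) →ₗ[ℂ] ρ.wt (μ - (n + 1 : ℕ)) := fun n =>
    (ρ.L (-1)).restrict fun v hv => L_mem_wt hv (-1) (by push_cast; ring)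
  have hT : ∀ n ≥ a, Function.Injective (T n) := fun n hn =>
    (injective_iff_map_eq_zero _).mpr fun v hv =>
      Subtype.ext (ha n hn v v.2 (congrArg Subtype.val hv))
  let dim : ℕ →o Set.Iic d :=
    ⟨fun k => ⟨Module.finrank ℂ (ρ.wt (μ - (a + k : ℕ))), (hd _).2⟩,
      monotone_nat_of_le_succ fun k =>
        LinearMap.finrank_le_finrank_of_injective (hT (a + k) (Nat.le_add_right a k))⟩
  obtain ⟨b, hb⟩ := WellFoundedGT.monotone_chain_condition dim
  obtain ⟨n, hn0, hn⟩ := hinf.exists_gt (a + b)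
  refine ⟨μ - n, hn0, fun k v hv => ?_, fun k w hw => ?_⟩
  · exact ha (n + k) (by omega) v (by rwa [Nat.cast_add, ← sub_sub])
  · obtain ⟨c, hc⟩ := Nat.exists_eq_add_of_le (show a ≤ n + k by omega)
    have hdim : Module.finrank ℂ (ρ.wt (μ - (a + c : ℕ)))
        = Module.finrank ℂ (ρ.wt (μ - (a + c + 1 : ℕ))) :=
      congrArg Subtype.val ((hb c (by omega)).symm.trans (hb (c + 1) (by omega)))
    rw [← hc] at hdim
    obtain ⟨v, hv⟩ := (LinearMap.injective_iff_surjective_of_finrank_eq_finrank hdim).mp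
      (hT (n + k) (by omega)) ⟨w, by convert hw using 2; push_cast; ring⟩
    exact ⟨v, by convert v.2 using 2; push_cast; ring, congrArg Subtype.val hv⟩

theorem IsTail.sub_natCast (h : ρ.IsTail ν) (n : ℕ) : ρ.IsTail (ν - n) := by
  refine ⟨?_, fun k v hv => ?_, fun k w hw => ?_⟩
  · induction n with
    | zero => simpa using h.wt_ne_bot
    | succ n ih =>
      obtain ⟨v, hv, hv0⟩ := Submodule.exists_mem_ne_zero_of_ne_bot ih
      exact fun hbot => hv0 (h.injective n v hv
        ((Submodule.mem_bot ℂ).mp (hbot ▸ L_mem_wt hv (-1) (by push_cast; ring))))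
  · exact h.injective (n + k) v (by rwa [Nat.cast_add, ← sub_sub])
  · rw [sub_sub, ← Nat.cast_add] at hw ⊢
    exact h.surjective (n + k) w hw

theorem IsTail.eq_zero_of_D_eq_zero (h : ρ.IsTail ν) (hv : v ∈ ρ.wt ν) (h0 : ρ.D n v = 0) :
    v = 0 := by
  induction n with
  | zero => exact h0
  | succ n ih => exact ih (h.injective n _ (D_mem_wt hv n rfl) (D_succ_apply n v ▸ h0))

theorem IsTail.exists_D_eq (h : ρ.IsTail ν) (hw : w ∈ ρ.wt (ν - n)) :
    ∃ v ∈ ρ.wt ν, ρ.D n v = w := by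
  induction n generalizing w with
  | zero => exact ⟨w, by simpa using hw, rfl⟩
  | succ n ih =>
    obtain ⟨u, hu, rfl⟩ := h.surjective n w hw
    obtain ⟨v, hv, rfl⟩ := ih hu
    exact ⟨v, hv, D_succ_apply n v⟩

end Tail

end QRep

section EventuallyKer

variable {R M N : Type*} [Semiring R] [AddCommMonoid M] [Module R M] [AddCommMonoid N] [Module R N]

/-- The vectors annihilated by all but finitely many of the operators `T k` with `k < 0`. -/
def eventuallyKer (T : ℤ → M →ₗ[R] N) : Submodule R M where
  carrier := {v | ∀ᶠ k in atBot, T k v = 0}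
  add_mem' hv hw := by
    filter_upwards [hv, hw] with k hvk hwk
    rw [map_add, hvk, hwk, add_zero]
  zero_mem' := .of_forall fun _ => map_zero _
  smul_mem' c v hv := by
    filter_upwards [hv] with k hk
    rw [map_smul, hk, smul_zero]

theorem eventually_apply_eq_zero_of_fg {T : ℤ → M →ₗ[R] N} {W : Submodule R M} (hW : W.FG)
    (h : W ≤ eventuallyKer T) : ∀ᶠ k in atBot, ∀ w ∈ W, T k w = 0 := by
  obtain ⟨S, rfl⟩ := hW
  have hS : ∀ᶠ k in atBot, ∀ w ∈ S, T k w = 0 :=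
    S.eventually_all.mpr fun w hw => h (Submodule.subset_span hw)
  filter_upwards [hS] with k hk
  exact fun w hw => (Submodule.span_le (p := LinearMap.ker (T k))).mpr hk hw

theorem eventually_atBot_add {p : ℤ → Prop} (h : ∀ᶠ k in atBot, p k) (j : ℤ) :
    ∀ᶠ k in atBot, p (k + j) :=
  (tendsto_atBot_add_const_right atBot j tendsto_id).eventually h

theorem eventually_atBot_ne_zero (j : ℤ) : ∀ᶠ k in atBot, k + j ≠ 0 :=
  eventually_atBot_add (eventually_ne_atBot (0 : ℤ)) j

end EventuallyKer

namespace QRep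

variable {V : Type} [AddCommGroup V] [Module ℂ V] {ρ : QRep V} {ν : ℂ} {v : V}

section NegKer

/-- The vectors annihilated by all operators of sufficiently negative degree. -/
def negKer (ρ : QRep V) : Submodule ℂ V :=
  eventuallyKer ρ.L ⊓ eventuallyKer ρ.H ⊓ eventuallyKer ρ.Q

theorem isSubmod_negKer : ρ.IsSubmod ρ.negKer := by
  refine ⟨fun j v ⟨⟨hL, hH⟩, hQ⟩ => ⟨⟨?_, ?_⟩, ?_⟩, fun j v ⟨⟨hL, hH⟩, hQ⟩ => ⟨⟨?_, ?_⟩, ?_⟩,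
    fun j v ⟨⟨hL, hH⟩, hQ⟩ => ⟨⟨?_, ?_⟩, ?_⟩⟩
  · filter_upwards [hL, eventually_atBot_add hL j, eventually_atBot_ne_zero j] with k h1 h2 h3
    rw [ρ.L_L_apply h3, h1, h2, map_zero, smul_zero, add_zero]
  · filter_upwards [hH, eventually_atBot_add hH j] with k h1 h2
    rw [H_L_apply, h1, add_comm, h2, map_zero, smul_zero, sub_zero]
  · filter_upwards [hQ, eventually_atBot_add hQ j] with k h1 h2
    rw [Q_L_apply, h1, h2, map_zero, smul_zero, sub_zero]
  · filter_upwards [hL, eventually_atBot_add hH j] with k h1 h2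
    rw [L_H_apply, h1, h2, map_zero, smul_zero, add_zero]
  · filter_upwards [hH, eventually_atBot_ne_zero j] with k h1 h2
    rw [ρ.H_H_apply h2, h1, map_zero]
  · filter_upwards [hQ, eventually_atBot_add hQ j] with k h1 h2
    rw [Q_H_apply, h1, add_comm, h2, map_zero, sub_zero]
  · filter_upwards [hL, eventually_atBot_add hQ j] with k h1 h2
    rw [L_Q_apply, h1, add_comm j, h2, map_zero, smul_zero, add_zero]
  · filter_upwards [hH, eventually_atBot_add hQ j] with k h1 h2
    rw [H_Q_apply, h1, h2, map_zero, add_zero]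
  · filter_upwards [hQ] with k h1
    rw [Q_Q_apply, h1, map_zero, neg_zero]

theorem parityInvolution_mem_negKer (hv : v ∈ ρ.negKer) : ρ.parityInvolution v ∈ ρ.negKer := by
  obtain ⟨⟨hL, hH⟩, hQ⟩ := hv
  refine ⟨⟨?_, ?_⟩, ?_⟩
  · filter_upwards [hL] with k h
    rw [L_parityInvolution, h, map_zero]
  · filter_upwards [hH] with k h
    rw [H_parityInvolution, h, map_zero]
  · filter_upwards [hQ] with k h
    rw [Q_parityInvolution, h, map_zero, neg_zero]

theorem L_neg_D_eq_zero {a : ℕ} (h : ∀ i ≥ a, ∀ e ∈ ρ.wt ν, ρ.L (-i) e = 0)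
    (hv : v ∈ ρ.wt ν) {i : ℕ} (hi : a ≤ i) (n : ℕ) : ρ.L (-i) (ρ.D n v) = 0 := by
  induction n generalizing i with
  | zero => exact h i hi v hv
  | succ n ih =>
    have hnext := ih (i := i + 1) (by omega)
    rw [D_succ_apply, ρ.L_L_apply (by omega), ih hi, map_zero,
      show -(i : ℤ) + -1 = -((i + 1 : ℕ) : ℤ) by push_cast; ring, hnext, smul_zero, add_zero]

theorem IsTail.negKer_ne_top (hν : ρ.IsTail ν) [FiniteDimensional ℂ (ρ.wt ν)] : ρ.negKer ≠ ⊤ := by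
  intro htop
  have hkill : ∀ᶠ k in atBot, ∀ e ∈ ρ.wt ν, ρ.L k e = 0 :=
    eventually_apply_eq_zero_of_fg (Submodule.fg_iff_finiteDimensional _ |>.mpr inferInstance)
      fun e _ => ((htop ▸ Submodule.mem_top : e ∈ ρ.negKer)).1.1
  obtain ⟨b, hb⟩ := eventually_atBot.mp hkill
  obtain ⟨a, ha0, hab⟩ : ∃ a : ℕ, a ≠ 0 ∧ -(a : ℤ) ≤ b :=
    ⟨b.natAbs + 1, by omega, by omega⟩
  have hD : ∀ {v}, v ∈ ρ.wt ν → ∀ n, ρ.L (-a) (ρ.D n v) = 0 := fun hv =>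
    L_neg_D_eq_zero (fun i hi => hb (-i) (by omega)) hv le_rfl
  obtain ⟨v, hv, hv0⟩ := Submodule.exists_mem_ne_zero_of_ne_bot hν.wt_ne_bot
  have hbracket : ∀ n ≥ a, -2 * a * (ν - n) + (a - a ^ 3) / 12 * ρ.c₀ = 0 := fun n hn => by
    have hw := D_mem_wt hv n rfl
    obtain ⟨e, he, hLe⟩ := hν.exists_D_eq (n := n - a)
      (L_mem_wt hw a (by rw [Nat.cast_sub hn]; push_cast; ring))
    have := L_L_neg_sub hw a
    rw [hD hv, ← hLe, hD he, map_zero, sub_zero] at this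
    exact_mod_cast (smul_eq_zero.mp this.symm).resolve_right
      fun h => hv0 (hν.eq_zero_of_D_eq_zero hv h)
  have h1 := hbracket a le_rfl
  have h2 := hbracket (a + 1) (by omega)
  push_cast at h2
  exact ha0 (Nat.cast_eq_zero.mp (by linear_combination (1 / 2) * h2 - (1 / 2) * h1 : (a : ℂ) = 0))

theorem IsTail.negKer_eq_bot (hν : ρ.IsTail ν) (hρ : ρ.IsSimple) [FiniteDimensional ℂ (ρ.wt ν)] :
    ρ.negKer = ⊥ :=
  (hρ.eq_bot_or_eq_top isSubmod_negKer fun _ => parityInvolution_mem_negKer).resolve_right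
    hν.negKer_ne_top

end NegKer

section OddOperators

theorem H_zero_D_apply (n : ℕ) (v : V) : ρ.H 0 (ρ.D n v) = ρ.D n (ρ.H 0 v) := by
  induction n with
  | zero => rfl
  | succ n ih => rw [D_succ_apply, D_succ_apply, H_zero_L_apply, ih]

theorem exists_H_zero_eigenvalue_max [FiniteDimensional ℂ (ρ.wt ν)] (hν : ρ.wt ν ≠ ⊥) :
    ∃ l : ℂ, (∃ v ∈ ρ.wt ν, v ≠ 0 ∧ ρ.H 0 v = l • v) ∧
      ∀ v ∈ ρ.wt ν, ρ.H 0 v = (l + 1) • v → v = 0 := by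
  have : Nontrivial (ρ.wt ν) := Submodule.nontrivial_iff_ne_bot.mpr hν
  let f : Module.End ℂ (ρ.wt ν) := (ρ.H 0).restrict fun v hv => H_mem_wt hv 0 (by simp)
  obtain ⟨l, hl, hmax⟩ := Set.exists_max_image _ Complex.re (Module.End.finite_hasEigenvalue f)
    (Module.End.exists_eigenvalue f)
  refine ⟨l, ?_, fun v hv h => by_contra fun h0 => ?_⟩
  · obtain ⟨v, hv⟩ := Module.End.HasEigenvalue.exists_hasEigenvector hl
    exact ⟨v, v.2, Subtype.coe_ne_coe.mpr hv.2, congrArg Subtype.val hv.apply_eq_smul⟩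
  · have hl1 : f.HasEigenvalue (l + 1) := Module.End.hasEigenvalue_of_hasEigenvector (x := ⟨v, hv⟩)
      ⟨Module.End.mem_eigenspace_iff.mpr (Subtype.ext h), fun h => h0 (congrArg Subtype.val h)⟩
    have := hmax _ hl1
    simp at this
    linarith

/-- `Q_k` raises the eigenvalue of `H_0` by one, and below a tail `H_0` has the same eigenvalues on
every weight space. -/
theorem IsTail.Q_eq_zero_of_max (hν : ρ.IsTail ν) {l : ℂ}
    (hmax : ∀ v ∈ ρ.wt ν, ρ.H 0 v = (l + 1) • v → v = 0) {i k : ℤ} (hik : i + k ≤ 0)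
    (hv : v ∈ ρ.wt (ν + i)) (hl : ρ.H 0 v = l • v) : ρ.Q k v = 0 := by
  obtain ⟨n, hn⟩ := Int.exists_eq_neg_ofNat hik
  have hn' : (i : ℂ) + k = -n := by exact_mod_cast hn
  obtain ⟨e, he, hDe⟩ := hν.exists_D_eq (n := n) (Q_mem_wt hv k (by linear_combination hn'))
  have hHQ : ρ.H 0 (ρ.Q k v) = (l + 1) • ρ.Q k v := by
    rw [H_Q_apply, hl, map_smul, zero_add, add_smul, one_smul]
  have hHe : ρ.H 0 e - (l + 1) • e = 0 := by
    refine hν.eq_zero_of_D_eq_zero (n := n)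
      (sub_mem (H_mem_wt he 0 (by simp)) (Submodule.smul_mem _ _ he)) ?_
    rw [map_sub, map_smul, ← H_zero_D_apply, hDe, hHQ, sub_self]
  rw [← hDe, hmax e he (sub_eq_zero.mp hHe), map_zero]

theorem IsSimple.Q_eq_zero_of_forall_apply_eq_zero (hρ : ρ.IsSimple) (hv0 : v ≠ 0)
    (hv : ∀ k, ρ.Q k v = 0) (k : ℤ) (w : V) : ρ.Q k w = 0 := by
  have hW : ∀ x, x ∈ ⨅ k, LinearMap.ker (ρ.Q k) ↔ ∀ k, ρ.Q k x = 0 := by simp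
  have hsub : ρ.IsSubmod (⨅ k, LinearMap.ker (ρ.Q k)) := by
    refine ⟨fun m x hx => (hW _).mpr fun k => ?_, fun m x hx => (hW _).mpr fun k => ?_,
      fun m x hx => (hW _).mpr fun k => ?_⟩ <;> rw [hW] at hx
    · simp [Q_L_apply, hx]
    · simp [Q_H_apply, hx]
    · simp [hx]
  rcases hρ.eq_bot_or_eq_top hsub (fun x hx => (hW _).mpr fun k => by
    simp [Q_parityInvolution, (hW x).mp hx]) with h | h
  · exact absurd ((Submodule.mem_bot ℂ).mp (h ▸ (hW v).mpr hv)) hv0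
  · exact (hW w).mp (h ▸ Submodule.mem_top) k

theorem IsTail.Q_eq_zero (hν : ρ.IsTail ν) (hρ : ρ.IsSimple) [FiniteDimensional ℂ (ρ.wt ν)]
    (k : ℤ) (w : V) : ρ.Q k w = 0 := by
  obtain ⟨l, ⟨v, hv, hv0, hlv⟩, hmax⟩ := exists_H_zero_eigenvalue_max hν.wt_ne_bot
  have hQ : ∀ j ≤ 0, ρ.Q j v = 0 := fun j hj =>
    hν.Q_eq_zero_of_max hmax (i := 0) (by simpa using hj) (by simpa using hv) hlv
  refine hρ.Q_eq_zero_of_forall_apply_eq_zero hv0 (fun j => ?_) k w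
  rw [← Submodule.mem_bot ℂ, ← hν.negKer_eq_bot hρ]
  have hj : ∀ᶠ i : ℤ in atBot, i + j ≤ 0 := eventually_atBot_add (eventually_le_atBot 0) j
  refine ⟨⟨?_, ?_⟩, ?_⟩
  · filter_upwards [hj] with i hi
    rw [L_Q_apply, hν.Q_eq_zero_of_max hmax hi (L_mem_wt hv i rfl)
      (by rw [H_zero_L_apply, hlv, map_smul]), add_comm j, hQ _ hi, smul_zero, add_zero]
  · filter_upwards [hj] with i hi
    rw [H_Q_apply, hν.Q_eq_zero_of_max hmax hi (H_mem_wt hv i rfl)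
      (by rw [H_zero_H_apply, hlv, map_smul]), hQ _ hi, add_zero]
  · filter_upwards [eventually_le_atBot 0] with i hi
    rw [Q_Q_apply, hQ i hi, map_zero, neg_zero]

theorem IsTail.eventuallyKer_inf_eq_bot (hν : ρ.IsTail ν) (hρ : ρ.IsSimple)
    [FiniteDimensional ℂ (ρ.wt ν)] : eventuallyKer ρ.L ⊓ eventuallyKer ρ.H = ⊥ := by
  rw [← hν.negKer_eq_bot hρ]
  exact le_antisymm (le_inf le_rfl fun v _ => .of_forall fun k => hν.Q_eq_zero hρ k v) inf_le_left

end OddOperators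

section EvenPart

/-- Simplicity over the even part, the twisted Heisenberg–Virasoro algebra spanned by the `L_m` and
`H_m`. -/
def IsEvenSimple (ρ : QRep V) : Prop :=
  ∀ W : Submodule ℂ V, (∀ m, ∀ v ∈ W, ρ.L m v ∈ W) → (∀ m, ∀ v ∈ W, ρ.H m v ∈ W) → W = ⊥ ∨ W = ⊤

theorem IsSimple.isEvenSimple (hρ : ρ.IsSimple) (hQ : ∀ k v, ρ.Q k v = 0) : ρ.IsEvenSimple := by
  have hscalar : (∀ v, ρ.parityInvolution v = v) ∨ ∀ v, ρ.parityInvolution v = -v := by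
    rcases hρ.eq_bot_or_eq_top (W := ρ.even)
      ⟨ρ.L_even, ρ.H_even, fun m v _ => hQ m v ▸ zero_mem _⟩
      (fun v hv => (parityInvolution_of_mem_even hv).symm ▸ hv) with h | h
    · have hodd : ρ.odd = ⊤ := by simpa [h] using ρ.grading.sup_eq_top
      exact .inr fun v => parityInvolution_of_mem_odd (hodd ▸ Submodule.mem_top)
    · exact .inl fun v => parityInvolution_of_mem_even (h ▸ Submodule.mem_top)
  refine fun W hL hH =>
    hρ.eq_bot_or_eq_top ⟨hL, hH, fun m v _ => hQ m v ▸ zero_mem _⟩ fun v hv => ?_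
  rcases hscalar with h | h
  · rwa [h]
  · rw [h]
    exact neg_mem hv

theorem IsEvenSimple.exists_H_zero_eq_smul (hρ : ρ.IsEvenSimple) (hν : ρ.wt ν ≠ ⊥)
    [FiniteDimensional ℂ (ρ.wt ν)] : ∃ F : ℂ, ∀ v, ρ.H 0 v = F • v := by
  obtain ⟨l, ⟨v, -, hv0, hlv⟩, -⟩ := exists_H_zero_eigenvalue_max hν
  refine ⟨l, fun x => Module.End.mem_eigenspace_iff.mp ?_⟩
  rcases hρ (Module.End.eigenspace (ρ.H 0) l)
    (fun m x hx => by rw [Module.End.mem_eigenspace_iff] at *; rw [H_zero_L_apply, hx, map_smul])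
    (fun m x hx => by rw [Module.End.mem_eigenspace_iff] at *; rw [H_zero_H_apply, hx, map_smul])
    with h | h
  · exact absurd ((Submodule.mem_bot ℂ).mp (h ▸ Module.End.mem_eigenspace_iff.mpr hlv)) hv0
  · exact h ▸ Submodule.mem_top

end EvenPart

end QRep

section TwistedModules

open scoped Pointwise

variable {K A E M ι : Type*} [Field K] [Ring A] [Algebra K A] [AddCommGroup E] [Module K E]
  [AddCommGroup M] [Module K M] [Module A M] [IsScalarTower K A M]

theorem exists_ne_zero_forall_apply_eq_smul {R : Type*} [FiniteDimensional K E] [AddCommGroup R]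
    [Module K R] {Ψ : Module.End K E →ₗ[K] R} (hΨ : Ψ ≠ 0) {c : ι → Module.End K E} {l : ι → K}
    (h : ∀ i x, Ψ (x * c i) = l i • Ψ x) : ∃ w ≠ 0, ∀ i, c i w = l i • w := by
  let Φ (v : E) : Module.Dual K E →ₗ[K] R := Ψ ∘ₗ (LinearMap.smulRightₗ (M := E)).flip v
  have hΦ (v : E) (φ : Module.Dual K E) : Φ v φ = Ψ (φ.smulRight v) := rfl
  obtain ⟨v, hv⟩ : ∃ v, LinearMap.ker (Φ v) ≠ ⊤ := by
    by_contra! hker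
    refine hΨ (LinearMap.ext fun x => ?_)
    have hx : x = ∑ i, ((Module.finBasis K E).coord i).smulRight (x (Module.finBasis K E i)) :=
      (Module.finBasis K E).ext fun j => by simp [Finsupp.single_apply]
    rw [hx, map_sum]
    exact Finset.sum_eq_zero fun i _ => LinearMap.congr_fun (LinearMap.ker_eq_top.mp (hker _)) _
  obtain ⟨w, hw, hw0⟩ := Submodule.exists_mem_ne_zero_of_ne_bot
    (p := (LinearMap.ker (Φ v)).dualCoannihilator) fun hbot => hv (by
      rw [← Subspace.dualCoannihilator_dualAnnihilator_eq (W := LinearMap.ker (Φ v)), hbot,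
        Submodule.dualAnnihilator_bot])
  refine ⟨w, hw0, fun i => sub_eq_zero.mp
    ((Module.forall_dual_apply_eq_zero_iff K _).mp fun φ => ?_)⟩
  have hφ : φ ∘ₗ c i - l i • φ ∈ LinearMap.ker (Φ v) := by
    have hcomp : (φ ∘ₗ c i).smulRight v = φ.smulRight v * c i := rfl
    rw [LinearMap.mem_ker, map_sub, map_smul, hΦ, hΦ, hcomp, h, sub_self]
  simpa using (Submodule.mem_dualCoannihilator _).mp hw _ hφ

theorem exists_mem_apply_eq_smul [IsAlgClosed K] {T : Module.End K E} {W : Submodule K E}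
    [FiniteDimensional K W] (hW : W ≠ ⊥) (hT : ∀ w ∈ W, T w ∈ W) :
    ∃ t : K, ∃ w ∈ W, w ≠ 0 ∧ T w = t • w := by
  have : Nontrivial W := Submodule.nontrivial_iff_ne_bot.mpr hW
  obtain ⟨t, ht⟩ := Module.End.exists_eigenvalue (T.restrict hT)
  obtain ⟨w, hw⟩ := ht.exists_hasEigenvector
  exact ⟨t, w, w.2, Subtype.coe_ne_coe.mpr hw.2, congrArg Subtype.val hw.apply_eq_smul⟩

theorem aeval_mapQ_mkQ {T : M →ₗ[K] M} {J : Submodule K M} (hJ : J ≤ J.comap T) (p : K[X]) (m : M) :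
    aeval (J.mapQ J T hJ) p (J.mkQ m) = J.mkQ (aeval T p m) := by
  induction p using Polynomial.induction_on generalizing m with
  | C a => simp
  | add p q hp hq => simp only [map_add, LinearMap.add_apply, hp, hq]
  | monomial n a ih =>
    rw [pow_succ, ← mul_assoc, map_mul, aeval_X, map_mul (aeval T), aeval_X, Module.End.mul_apply,
      Module.End.mul_apply]
    exact ih (T m)

variable {θ : M →ₗ[K] M} {U : E →ₗ[K] M}

variable (A) in
/-- The `K`-subspace spanned by the `a • U e` and the `a • θ (U e)`, for `a` in `A` and `e`
in `E`, which represents every class of `twistedSpan` modulo `1 - X`. -/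
noncomputable def twistedGen (θ : M →ₗ[K] M) (U : E →ₗ[K] M) : Submodule K M :=
  Submodule.map₂ (Algebra.lsmul K K M (A := A)).toLinearMap ⊤
    (LinearMap.range U ⊔ LinearMap.range (θ ∘ₗ U))

theorem smul_apply_mem_twistedGen (a : A) (e : E) : a • U e ∈ twistedGen A θ U :=
  Submodule.apply_mem_map₂ _ Submodule.mem_top
    (Submodule.mem_sup_left (LinearMap.mem_range_self U e))

theorem fg_twistedGen [FiniteDimensional K A] [FiniteDimensional K E] : (twistedGen A θ U).FG :=
  .map₂ _ Module.Finite.fg_top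
    (.sup (Submodule.fg_iff_finiteDimensional _ |>.mpr inferInstance)
      (Submodule.fg_iff_finiteDimensional _ |>.mpr inferInstance))

variable [Module K[X] M]

variable (A) in
/-- The `K[X]`-submodule generated by the `a • U e` and the `a • θ (U e)`, for `a` in `A` and `e` in
`E`, whose reduction modulo `1 - X` carries the eigenvectors sought. -/
noncomputable def twistedSpan (θ : M →ₗ[K] M) (U : E →ₗ[K] M) : Submodule K[X] M :=
  span K[X] (twistedGen A θ U)

theorem smul_apply_mem_twistedSpan (a : A) (e : E) : a • U e ∈ twistedSpan A θ U :=
  Submodule.subset_span (smul_apply_mem_twistedGen a e)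

theorem smul_theta_apply_mem_twistedSpan (a : A) (e : E) : a • θ (U e) ∈ twistedSpan A θ U :=
  Submodule.subset_span (Submodule.apply_mem_map₂ _ Submodule.mem_top
    (Submodule.mem_sup_right (LinearMap.mem_range_self (θ ∘ₗ U) e)))

variable [IsScalarTower K K[X] M]

theorem twistedSpan_le {N : Submodule K[X] M} (h : ∀ (a : A) e, a • U e ∈ N)
    (hθ : ∀ (a : A) e, a • θ (U e) ∈ N) : twistedSpan A θ U ≤ N := by
  have hle : twistedGen A θ U ≤ N.restrictScalars K := by
    refine Submodule.map₂_le.mpr fun a _ m hm => ?_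
    obtain ⟨_, ⟨e, rfl⟩, _, ⟨e', rfl⟩, rfl⟩ := Submodule.mem_sup.mp hm
    simpa using add_mem (h a e) (hθ a e')
  exact Submodule.span_le.mpr hle

theorem map_smul_eq_of_map_X_smul {q : K[X]}
    (hθ : ∀ m, θ ((X : K[X]) • m) = (X : K[X]) • θ m + q • m) (p : K[X]) (m : M) :
    θ (p • m) = p • θ m + (q * derivative p) • m := by
  induction p using Polynomial.induction_on with
  | C a => rw [← algebraMap_eq, algebraMap_smul, algebraMap_smul, map_smul]; simp
  | add p q hp hq => rw [add_smul, map_add, hp, hq, derivative_add]; module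
  | monomial n a ih =>
    rw [pow_succ', mul_left_comm, mul_smul, hθ, ih, derivative_mul (f := X), derivative_X]
    module

theorem exists_sub_mem_smul_span {S : Submodule K M} {n : M} (hn : n ∈ span K[X] (S : Set M)) :
    ∃ s ∈ S, n - s ∈ (1 - X : K[X]) • span K[X] (S : Set M) := by
  induction hn using Submodule.span_induction with
  | mem s hs => exact ⟨s, hs, by simp⟩
  | zero => exact ⟨0, S.zero_mem, by simp⟩
  | add m n _ _ hm hn =>
    obtain ⟨s, hs, hm⟩ := hm
    obtain ⟨t, ht, hn⟩ := hn
    exact ⟨s + t, S.add_mem hs ht, by simpa only [add_sub_add_comm] using add_mem hm hn⟩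
  | smul p n _ hn =>
    obtain ⟨s, hs, hn⟩ := hn
    obtain ⟨q, hq⟩ := X_sub_C_dvd_sub_C_eval (a := (1 : K)) (p := p)
    refine ⟨p.eval 1 • s, S.smul_mem _ hs, ?_⟩
    have hsplit : p • n - p.eval 1 • s = p • (n - s) + (1 - X : K[X]) • (-q) • s := by
      rw [smul_smul, show (1 - X) * -q = p - C (p.eval 1) by rw [hq, C_1]; ring, sub_smul,
        ← algebraMap_eq, algebraMap_smul]
      module
    rw [hsplit]
    exact add_mem (Submodule.smul_mem _ _ hn) (Submodule.smul_mem_pointwise_smul _ _ _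
      (Submodule.smul_mem _ _ (Submodule.subset_span hs)))

theorem theta_mem_smul_twistedSpan
    (hθX : ∀ m, θ ((X : K[X]) • m) = (X : K[X]) • θ m + ((1 - X) * X : K[X]) • m)
    (hθN : ∀ n ∈ twistedSpan A θ U, θ n ∈ twistedSpan A θ U) {m : M}
    (hm : m ∈ (1 - X : K[X]) • twistedSpan A θ U) : θ m ∈ (1 - X : K[X]) • twistedSpan A θ U := by
  obtain ⟨n, hn, rfl⟩ := Submodule.mem_smul_pointwise_iff_exists _ _ _ |>.mp hm
  have hθ : θ ((1 - X : K[X]) • n) = (1 - X : K[X]) • (θ n - (X : K[X]) • n) := by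
    rw [map_smul_eq_of_map_X_smul hθX, derivative_sub, derivative_one, derivative_X]
    module
  rw [hθ]
  exact Submodule.smul_mem_pointwise_smul _ _ _
    (sub_mem (hθN n hn) (Submodule.smul_mem _ _ hn))

theorem fg_twistedSpan [FiniteDimensional K A] [FiniteDimensional K E] :
    (twistedSpan A θ U).FG := by
  obtain ⟨S, hS⟩ := fg_twistedGen (A := A) (θ := θ) (U := U)
  exact ⟨S, by rw [twistedSpan, ← hS, Submodule.span_span_of_tower]⟩

variable [SMulCommClass A K[X] M]

theorem smul_mem_twistedSpan (a : A) {n : M} (hn : n ∈ twistedSpan A θ U) :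
    a • n ∈ twistedSpan A θ U := by
  refine twistedSpan_le (N := (twistedSpan A θ U).comap (Algebra.lsmul K K[X] M a))
    (fun b e => ?_) (fun b e => ?_) hn
  · simpa [smul_smul] using smul_apply_mem_twistedSpan (θ := θ) (U := U) (a * b) e
  · simpa [smul_smul] using smul_theta_apply_mem_twistedSpan (θ := θ) (U := U) (a * b) e

theorem theta_mem_twistedSpan
    (hθX : ∀ m, θ ((X : K[X]) • m) = (X : K[X]) • θ m + ((1 - X) * X : K[X]) • m)
    (hθA : ∀ (a : A) m, θ (a • m) = a • θ m) (hθθ : ∀ e, θ (θ (U e)) ∈ twistedSpan A θ U) {n : M}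
    (hn : n ∈ twistedSpan A θ U) : θ n ∈ twistedSpan A θ U := by
  let N : Submodule K[X] M :=
    { carrier := {n | n ∈ twistedSpan A θ U ∧ θ n ∈ twistedSpan A θ U}
      add_mem' := fun hm hn => ⟨add_mem hm.1 hn.1, map_add θ _ _ ▸ add_mem hm.2 hn.2⟩
      zero_mem' := ⟨zero_mem _, (map_zero θ).symm ▸ zero_mem _⟩
      smul_mem' := fun p n hn => ⟨Submodule.smul_mem _ _ hn.1,
        map_smul_eq_of_map_X_smul hθX p n ▸
          add_mem (Submodule.smul_mem _ _ hn.2) (Submodule.smul_mem _ _ hn.1)⟩ }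
  refine (twistedSpan_le (N := N) (fun a e => ⟨smul_apply_mem_twistedSpan a e, ?_⟩)
    (fun a e => ⟨smul_theta_apply_mem_twistedSpan a e, ?_⟩) hn).2
  · exact hθA a _ ▸ smul_theta_apply_mem_twistedSpan a e
  · exact (hθA a (θ (U e))).symm ▸ smul_mem_twistedSpan a (hθθ e)

theorem smul_mem_smul_twistedSpan (a : A) {m : M} (hm : m ∈ (1 - X : K[X]) • twistedSpan A θ U) :
    a • m ∈ (1 - X : K[X]) • twistedSpan A θ U := by
  obtain ⟨n, hn, rfl⟩ := Submodule.mem_smul_pointwise_iff_exists _ _ _ |>.mp hm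
  rw [smul_comm]
  exact Submodule.smul_mem_pointwise_smul _ _ _ (smul_mem_twistedSpan a hn)

/-- Otherwise `N = (1 - X) N` for a finitely generated torsion-free `N`, contrary to Nakayama. -/
theorem exists_apply_notMem_smul_twistedSpan [FiniteDimensional K A] [FiniteDimensional K E]
    [Module.IsTorsionFree K[X] M] (hU : U ≠ 0)
    (hθJ : ∀ m ∈ (1 - X : K[X]) • twistedSpan A θ U, θ m ∈ (1 - X : K[X]) • twistedSpan A θ U) :
    ∃ e, U e ∉ (1 - X : K[X]) • twistedSpan A θ U := by
  by_contra! hmem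
  have hle : twistedSpan A θ U ≤ Ideal.span {(1 - X : K[X])} • twistedSpan A θ U := by
    rw [Submodule.ideal_span_singleton_smul]
    exact twistedSpan_le (fun a e => smul_mem_smul_twistedSpan a (hmem e))
      (fun a e => smul_mem_smul_twistedSpan a (hθJ _ (hmem e)))
  obtain ⟨r, hr, hrN⟩ :=
    Submodule.exists_sub_one_mem_and_smul_eq_zero_of_fg_of_le_smul _ _ fg_twistedSpan hle
  have hr0 : r ≠ 0 := by
    rintro rfl
    obtain ⟨q, hq⟩ := Ideal.mem_span_singleton.mp hr
    simpa using congrArg (eval 1) hq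
  refine hU (LinearMap.ext fun e => (smul_eq_zero.mp (hrN (U e) ?_)).resolve_left hr0)
  simpa using smul_apply_mem_twistedSpan (θ := θ) (U := U) (1 : A) e

theorem exists_smul_sub_eval_smul_mem [IsAlgClosed K] [FiniteDimensional K A]
    [FiniteDimensional K E] [Module.IsTorsionFree K[X] M] (hU : U ≠ 0)
    (hθX : ∀ m, θ ((X : K[X]) • m) = (X : K[X]) • θ m + ((1 - X) * X : K[X]) • m)
    (hθA : ∀ (a : A) m, θ (a • m) = a • θ m) (hθθ : ∀ e, θ (θ (U e)) ∈ twistedSpan A θ U)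
    {c : ι → A} {f : ι → K[X]}
    (hc : ∀ i e, c i • U e - aeval θ (f i) (U e) ∈ (1 - X : K[X]) • twistedSpan A θ U) :
    ∃ t : K, ∃ m ∉ (1 - X : K[X]) • twistedSpan A θ U,
      ∀ i, c i • m - (f i).eval t • m ∈ (1 - X : K[X]) • twistedSpan A θ U := by
  have hθN := fun n => theta_mem_twistedSpan (n := n) hθX hθA hθθ
  have hθJ := fun m => theta_mem_smul_twistedSpan (m := m) hθX hθN
  let J := ((1 - X : K[X]) • twistedSpan A θ U).restrictScalars K
  let θ' : Module.End K (M ⧸ J) := J.mapQ J θ hθJ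
  let c' (i : ι) : Module.End K (M ⧸ J) :=
    J.mapQ J (Algebra.lsmul K K M (c i)) fun m => smul_mem_smul_twistedSpan (c i)
  let W : Submodule K (M ⧸ J) :=
    (twistedGen A θ U).map J.mkQ ⊓ ⨅ i, LinearMap.ker (c' i - aeval θ' (f i))
  have hWθ : ∀ w ∈ W, θ' w ∈ W := by
    rintro _ ⟨⟨s, hs, rfl⟩, hker⟩
    refine ⟨?_, (Submodule.mem_iInf _).mpr fun i => ?_⟩
    · obtain ⟨s', hs', hsub⟩ := exists_sub_mem_smul_span (hθN s (Submodule.subset_span hs))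
      exact ⟨s', hs', ((Submodule.Quotient.eq J).mpr hsub).symm⟩
    · have hcomm : Commute (c' i - aeval θ' (f i)) θ' := by
        refine .sub_left ?_ (by simpa using (commute_X (f i)).symm.map (aeval θ'))
        refine LinearMap.ext fun q => ?_
        obtain ⟨m, rfl⟩ := J.mkQ_surjective q
        exact congrArg J.mkQ (hθA (c i) m).symm
      rw [LinearMap.mem_ker, ← Module.End.mul_apply, hcomm.eq, Module.End.mul_apply,
        (Submodule.mem_iInf _).mp hker i, map_zero]
  have hW : W ≠ ⊥ := by
    obtain ⟨e, he⟩ := exists_apply_notMem_smul_twistedSpan hU hθJ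
    refine (Submodule.ne_bot_iff _).mpr ⟨J.mkQ (U e), ⟨⟨U e, ?_, rfl⟩, ?_⟩, fun h0 =>
      he ((Submodule.Quotient.mk_eq_zero J).mp h0)⟩
    · simpa using smul_apply_mem_twistedGen (θ := θ) (U := U) (1 : A) e
    · refine (Submodule.mem_iInf _).mpr fun i => ?_
      exact sub_eq_zero.mpr (((Submodule.Quotient.eq J).mpr (hc i e)).trans
        (aeval_mapQ_mkQ hθJ (f i) (U e)).symm)
  have := (Submodule.fg_iff_finiteDimensional _).mp (fg_twistedGen (A := A) (θ := θ) (U := U))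
  obtain ⟨t, w, hw, hw0, htw⟩ := exists_mem_apply_eq_smul hW hWθ
  obtain ⟨m, rfl⟩ := J.mkQ_surjective w
  refine ⟨t, m, fun hm => hw0 ((Submodule.Quotient.mk_eq_zero J).mpr hm), fun i => ?_⟩
  have hker : c' i (J.mkQ m) = aeval θ' (f i) (J.mkQ m) :=
    sub_eq_zero.mp ((Submodule.mem_iInf _).mp hw.2 i)
  rw [Module.End.aeval_apply_of_hasEigenvector ⟨Module.End.mem_eigenspace_iff.mpr htw, hw0⟩]
    at hker
  exact (Submodule.Quotient.eq J).mp hker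

theorem exists_linearMap_mul_eq_smul [IsAlgClosed K] [FiniteDimensional K A] [FiniteDimensional K E]
    [Module.IsTorsionFree K[X] M] (hU : U ≠ 0)
    (hθX : ∀ m, θ ((X : K[X]) • m) = (X : K[X]) • θ m + ((1 - X) * X : K[X]) • m)
    (hθA : ∀ (a : A) m, θ (a • m) = a • θ m) (hθθ : ∀ e, θ (θ (U e)) ∈ twistedSpan A θ U)
    {c : ι → A} {f : ι → K[X]}
    (hc : ∀ i e, c i • U e - aeval θ (f i) (U e) ∈ (1 - X : K[X]) • twistedSpan A θ U) :
    ∃ (t : K) (Ψ : A →ₗ[K] M ⧸ ((1 - X : K[X]) • twistedSpan A θ U).restrictScalars K), Ψ ≠ 0 ∧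
      ∀ i x, Ψ (x * c i) = (f i).eval t • Ψ x := by
  obtain ⟨t, m, hm, hcm⟩ := exists_smul_sub_eval_smul_mem hU hθX hθA hθθ hc
  let J := ((1 - X : K[X]) • twistedSpan A θ U).restrictScalars K
  refine ⟨t, J.mkQ ∘ₗ (LinearMap.toSpanSingleton A M m).restrictScalars K, fun h => hm ?_,
    fun i x => (Submodule.Quotient.eq J).mpr ?_⟩
  · exact (Submodule.Quotient.mk_eq_zero J).mp (by simpa using LinearMap.congr_fun h 1)
  · have hx : x • (c i • m - (f i).eval t • m) ∈ J := smul_mem_smul_twistedSpan x (hcm i)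
    simpa [smul_sub, mul_smul, smul_comm x] using hx

end TwistedModules

section SequenceModule

open scoped Pointwise

variable {K E : Type*} [Field K] [AddCommGroup E] [Module K E]

variable (K E) in
/-- The right shift of sequences. -/
def rightShift : Module.End K (ℕ → E) :=
  LinearMap.pi fun n => n.casesOn 0 LinearMap.proj

variable (K E) in
/-- Multiplication of a sequence by its index, the Euler derivation `X d/dX`. -/
def indexMul : Module.End K (ℕ → E) :=
  LinearMap.pi fun n => (n : K) • LinearMap.proj n

/-- Sequences are a module over `K[X]`, with `X` acting as the right shift. -/
@[reducible]
noncomputable def sequenceModule : Module K[X] (ℕ → E) :=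
  Module.compHom _ (aeval (rightShift K E)).toRingHom

attribute [local instance] sequenceModule

theorem X_smul_apply_zero (m : ℕ → E) : ((X : K[X]) • m) 0 = 0 :=
  congrFun (LinearMap.congr_fun (aeval_X (rightShift K E)) m) 0

theorem X_smul_apply_succ (m : ℕ → E) (n : ℕ) : ((X : K[X]) • m) (n + 1) = m n :=
  congrFun (LinearMap.congr_fun (aeval_X (rightShift K E)) m) (n + 1)

theorem indexMul_X_smul (m : ℕ → E) :
    indexMul K E ((X : K[X]) • m) = (X : K[X]) • indexMul K E m + (X : K[X]) • m := by
  funext n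
  cases n with
  | zero => simp [indexMul, X_smul_apply_zero]
  | succ n => simp [indexMul, X_smul_apply_succ, add_smul]

theorem isScalarTower_sequence : IsScalarTower K K[X] (ℕ → E) where
  smul_assoc a p m := by
    change aeval (rightShift K E) (a • p) m = a • aeval (rightShift K E) p m
    rw [map_smul, LinearMap.smul_apply]

attribute [local instance] isScalarTower_sequence

theorem compLeft_smul {E' : Type*} [AddCommGroup E'] [Module K E'] (f : E →ₗ[K] E') (p : K[X])
    (m : ℕ → E) : f.compLeft ℕ (p • m) = p • f.compLeft ℕ m := by
  have hX (m : ℕ → E) : f.compLeft ℕ ((X : K[X]) • m) = (X : K[X]) • f.compLeft ℕ m := by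
    funext n
    cases n with
    | zero => simp [X_smul_apply_zero]
    | succ n => simp [X_smul_apply_succ]
  induction p using Polynomial.induction_on generalizing m with
  | C k => rw [← algebraMap_eq, algebraMap_smul, algebraMap_smul, map_smul]
  | add p q hp hq => rw [add_smul, map_add, hp, hq, add_smul]
  | monomial n k ih => rw [pow_succ, ← mul_assoc, mul_smul, ih, hX, ← mul_smul]

theorem compLeft_indexMul {E' : Type*} [AddCommGroup E'] [Module K E'] (f : E →ₗ[K] E')
    (m : ℕ → E) : f.compLeft ℕ (indexMul K E m) = indexMul K E' (f.compLeft ℕ m) := by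
  funext n
  simp [indexMul]

theorem smulCommClass_sequence : SMulCommClass (Module.End K E) K[X] (ℕ → E) where
  smul_comm a p m := compLeft_smul a p m

theorem isSMulRegular_X_sub_C (a : K) : IsSMulRegular (ℕ → E) (X - C a) := by
  refine isSMulRegular_iff_right_eq_zero_of_smul.mpr fun m hm => ?_
  rw [sub_smul, ← algebraMap_eq, algebraMap_smul, sub_eq_zero] at hm
  by_cases ha : a = 0
  · funext n
    simpa [ha, X_smul_apply_succ] using congrFun hm (n + 1)
  · funext n
    induction n with
    | zero => simpa [X_smul_apply_zero, ha] using (congrFun hm 0).symm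
    | succ n ih => simpa [X_smul_apply_succ, ih, ha] using (congrFun hm (n + 1)).symm

theorem isTorsionFree_sequence [IsAlgClosed K] : Module.IsTorsionFree K[X] (ℕ → E) where
  isSMulRegular p hp := by
    have hC : IsSMulRegular (ℕ → E) (C p.leadingCoeff) := by
      refine isSMulRegular_iff_right_eq_zero_of_smul.mpr fun m hm => ?_
      rw [← algebraMap_eq, algebraMap_smul] at hm
      exact (smul_eq_zero.mp hm).resolve_left (leadingCoeff_ne_zero.mpr hp.ne_zero)
    rw [(IsAlgClosed.splits p).eq_prod_roots]
    refine hC.mul (Multiset.prod_induction _ _ (fun _ _ => IsSMulRegular.mul) (.one _) ?_)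
    simp only [Multiset.mem_map]
    rintro _ ⟨a, -, rfl⟩
    exact isSMulRegular_X_sub_C a

attribute [local instance] smulCommClass_sequence isTorsionFree_sequence

theorem indexMul_smul (p : K[X]) (m : ℕ → E) :
    indexMul K E (p • m) = p • indexMul K E m + (X * derivative p) • m :=
  map_smul_eq_of_map_X_smul indexMul_X_smul p m

variable (K E) in
/-- The operator `(1 - X) X d/dX` on sequences. -/
noncomputable def twist : Module.End K (ℕ → E) :=
  Algebra.lsmul K K (ℕ → E) (1 - X : K[X]) ∘ₗ indexMul K E

theorem twist_apply (m : ℕ → E) : twist K E m = (1 - X : K[X]) • indexMul K E m :=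
  rfl

theorem twist_X_smul (m : ℕ → E) :
    twist K E ((X : K[X]) • m) = (X : K[X]) • twist K E m + ((1 - X) * X : K[X]) • m := by
  rw [twist_apply, twist_apply, indexMul_X_smul]
  module

theorem twist_smul (a : Module.End K E) (m : ℕ → E) : twist K E (a • m) = a • twist K E m := by
  rw [twist_apply, twist_apply, smul_comm a]
  exact congrArg _ (compLeft_indexMul a m).symm

theorem twist_twist (m : ℕ → E) : twist K E (twist K E m) =
    ((1 - X) ^ 2 : K[X]) • indexMul K E (indexMul K E m) -
      ((1 - X) * X : K[X]) • indexMul K E m := by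
  rw [twist_apply, twist_apply, indexMul_smul, derivative_sub, derivative_one, derivative_X]
  module

theorem twist_twist_twist (m : ℕ → E) : twist K E (twist K E (twist K E m)) =
    ((1 - X) ^ 3 : K[X]) • indexMul K E (indexMul K E (indexMul K E m)) -
      (3 * (1 - X) ^ 2 * X : K[X]) • indexMul K E (indexMul K E m) -
      ((1 - X) * X * (1 - 2 * X) : K[X]) • indexMul K E m := by
  rw [twist_twist, twist_apply, indexMul_smul, map_add, indexMul_smul, indexMul_smul]
  simp only [derivative_mul, derivative_sub, derivative_one, derivative_X, derivative_zero]
  module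

section Relations

variable {E₀ : Type*} [AddCommGroup E₀] [Module K E₀] {U : E₀ →ₗ[K] ℕ → E} {w : ℕ → E}
  {e e₁ e₂ : E₀} {a a' a₂ b b' b₂ : K}

local notation "δ" => indexMul K E
local notation "Θ" => twist K E
local notation "𝒩" => twistedSpan (Module.End K E) (twist K E) U

theorem apply_mem_twistedSpan (e : E₀) : U e ∈ 𝒩 := by
  simpa using smul_apply_mem_twistedSpan (θ := Θ) (U := U) (1 : Module.End K E) e

theorem twist_apply_mem_twistedSpan (e : E₀) : Θ (U e) ∈ 𝒩 := by
  simpa using smul_theta_apply_mem_twistedSpan (θ := Θ) (U := U) (1 : Module.End K E) e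

theorem twist_twist_mem_twistedSpan (hw : w ∈ 𝒩)
    (h : (X : K[X]) • w = (1 - X : K[X]) • ((X : K[X]) • (U e₁ + δ (δ (U e)) + a • δ (U e)) -
      δ (δ (U e)) + b • δ (U e))) : Θ (Θ (U e)) ∈ 𝒩 := by
  have hθθ : Θ (Θ (U e)) = ((1 - X) * X : K[X]) • U e₁ + (X : K[X]) • (a - 1) • Θ (U e) +
      b • Θ (U e) - (X : K[X]) • w := by
    rw [h, twist_twist, twist_apply]
    module
  have hθ (k : K) : k • Θ (U e) ∈ 𝒩 :=
    Submodule.smul_of_tower_mem _ k (twist_apply_mem_twistedSpan e)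
  rw [hθθ]
  exact sub_mem (add_mem (add_mem (smul_mem _ _ (apply_mem_twistedSpan e₁)) (smul_mem _ _ (hθ _)))
    (hθ _)) (smul_mem _ _ hw)

theorem sub_aeval_twist_mem_of_weight_one (hw : w ∈ 𝒩)
    (h : (X : K[X]) • w = (1 - X : K[X]) • ((X : K[X]) • (U e₁ + δ (δ (U e)) + a • δ (U e)) -
      δ (δ (U e)) + b • δ (U e))) :
    w - aeval Θ (X * (C (a + b - 1) - X)) (U e) ∈ (1 - X : K[X]) • 𝒩 := by
  refine Submodule.mem_smul_pointwise_iff_exists _ _ _ |>.mpr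
    ⟨w + (X : K[X]) • U e₁ + (1 - a) • Θ (U e), add_mem (add_mem hw ?_) ?_, ?_⟩
  · exact smul_mem _ _ (apply_mem_twistedSpan e₁)
  · exact Submodule.smul_of_tower_mem _ _ (twist_apply_mem_twistedSpan e)
  · have hf : aeval Θ (X * (C (a + b - 1) - X)) (U e) = (a + b - 1) • Θ (U e) - Θ (Θ (U e)) := by
      simp [mul_sub, sub_smul, add_smul]
    have hX : (1 - X : K[X]) • w = w - (X : K[X]) • w := by rw [sub_smul, one_smul]
    rw [hf, smul_add, smul_add, hX, h, twist_twist, twist_apply]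
    module

theorem sub_aeval_twist_mem_of_weight_two (hw : w ∈ 𝒩) (hθθ : ∀ e, Θ (Θ (U e)) ∈ 𝒩)
    (h : (X ^ 2 : K[X]) • w = ((1 - X) ^ 2 : K[X]) • ((X ^ 2 : K[X]) •
      (U e₂ - (3 : K[X]) • δ (U e₁) - δ (δ (δ (U e))) + a • δ (δ (U e)) + a' • δ (U e)) +
      δ (δ (δ (U e))) + b • δ (δ (U e)) + b' • δ (U e))) :
    w - aeval Θ (X * (X + 1) * (2 * X + C (a + b + 4))) (U e) ∈ (1 - X : K[X]) • 𝒩 := by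
  have hf : aeval Θ (X * (X + 1) * (2 * X + C (a + b + 4))) (U e) =
      (2 : K) • Θ (Θ (Θ (U e))) + (a + b + 6) • Θ (Θ (U e)) + (a + b + 4) • Θ (U e) := by
    simp [mul_add, add_mul, add_smul, map_ofNat, Module.End.ofNat_apply]
    module
  have hX : (1 - X : K[X]) • (1 + X : K[X]) • w = w - (X ^ 2 : K[X]) • w := by module
  have hθ := twist_apply_mem_twistedSpan (U := U) e
  refine Submodule.mem_smul_pointwise_iff_exists _ _ _ |>.mpr ⟨(1 + X : K[X]) • w +
    (((1 - X) * X ^ 2 : K[X]) • U e₂ - (3 * X ^ 2 : K[X]) • Θ (U e₁) - Θ (Θ (Θ (U e))) -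
      (3 * (X + 2) + C a * (1 + X) : K[X]) • Θ (Θ (U e)) + (C a' * X ^ 2 + C b' - C b -
        C a * (1 + X + X ^ 2) - (X ^ 2 + 3 * X + 4) : K[X]) • Θ (U e)), ?_, ?_⟩
  · refine add_mem (smul_mem _ _ hw) (add_mem (sub_mem (sub_mem (sub_mem ?_ ?_) ?_) ?_) ?_)
    · exact smul_mem _ _ (apply_mem_twistedSpan e₂)
    · exact smul_mem _ _ (twist_apply_mem_twistedSpan e₁)
    · exact theta_mem_twistedSpan twist_X_smul twist_smul hθθ (hθθ e)
    · exact smul_mem _ _ (hθθ e)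
    · exact smul_mem _ _ hθ
  · rw [hf, smul_add, hX, h, twist_twist_twist, twist_twist, twist_apply, twist_apply]
    simp only [← algebraMap_eq]
    match_scalars <;> (try simp only [map_ofNat]) <;> ring

theorem sub_aeval_twist_mem_of_weight_zero
    (h : w = (1 - X : K[X]) • (U e₁ - a • δ (U e))) :
    w - aeval Θ (-(C a * X)) (U e) ∈ (1 - X : K[X]) • 𝒩 := by
  refine Submodule.mem_smul_pointwise_iff_exists _ _ _ |>.mpr ⟨U e₁, apply_mem_twistedSpan e₁, ?_⟩
  simp [h, smul_sub, twist_apply, smul_comm a]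

theorem exists_common_eigenvector_of_relations [IsAlgClosed K] [FiniteDimensional K E]
    [FiniteDimensional K E₀] (hU : U ≠ 0) {C₁ C₂ C₃ : Module.End K E₀} {c₁ c₂ c₃ : Module.End K E}
    {F : K}
    (h₁ : ∀ e, (X : K[X]) • c₁ • U e = (1 - X : K[X]) • ((X : K[X]) • (U (C₁ e) + δ (δ (U e)) +
      a • δ (U e)) - δ (δ (U e)) + b • δ (U e)))
    (h₂ : ∀ e, (X ^ 2 : K[X]) • c₂ • U e = ((1 - X) ^ 2 : K[X]) • ((X ^ 2 : K[X]) • (U (C₂ e) -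
      (3 : K[X]) • δ (U (C₁ e)) - δ (δ (δ (U e))) + a₂ • δ (δ (U e)) + a' • δ (U e)) +
      δ (δ (δ (U e))) + b₂ • δ (δ (U e)) + b' • δ (U e)))
    (h₃ : ∀ e, c₃ • U e = (1 - X : K[X]) • (U (C₃ e) - F • δ (U e))) :
    ∃ t : K, ∃ w ≠ 0, c₁ w = (t * (a + b - 1 - t)) • w ∧
      c₂ w = (t * (t + 1) * (2 * t + (a₂ + b₂ + 4))) • w ∧ c₃ w = -(F * t) • w := by
  have hθθ (e : E₀) := twist_twist_mem_twistedSpan (smul_apply_mem_twistedSpan c₁ e) (h₁ e)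
  obtain ⟨t, Ψ, hΨ, h⟩ := exists_linearMap_mul_eq_smul (c := ![c₁, c₂, c₃])
    (f := ![X * (C (a + b - 1) - X), X * (X + 1) * (2 * X + C (a₂ + b₂ + 4)), -(C F * X)]) hU
    twist_X_smul twist_smul hθθ (fun i e => by
      fin_cases i
      · exact sub_aeval_twist_mem_of_weight_one (smul_apply_mem_twistedSpan c₁ e) (h₁ e)
      · exact sub_aeval_twist_mem_of_weight_two (smul_apply_mem_twistedSpan c₂ e) hθθ (h₂ e)
      · exact sub_aeval_twist_mem_of_weight_zero (h₃ e))
  obtain ⟨w, hw, hcw⟩ := exists_ne_zero_forall_apply_eq_smul hΨ h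
  exact ⟨t, w, hw, by simpa using hcw 0, by simpa using hcw 1, by simpa using hcw 2⟩

end Relations

end SequenceModule

namespace QRep

variable {V : Type} [AddCommGroup V] [Module ℂ V]

section Ladder

/-- The weight-preserving operator `L_k L_{-1} ^ k`. -/
def ladderL (ρ : QRep V) (k : ℕ) : V →ₗ[ℂ] V :=
  ρ.L k ∘ₗ ρ.D k

/-- The weight-preserving operator `H_1 L_{-1}`. -/
def ladderH (ρ : QRep V) : V →ₗ[ℂ] V :=
  ρ.H 1 ∘ₗ ρ.D 1

variable {ρ : QRep V} {ν F : ℂ} {e : V}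

theorem ladderL_mem_wt (k : ℕ) (he : e ∈ ρ.wt ν) : ρ.ladderL k e ∈ ρ.wt ν :=
  L_mem_wt (D_mem_wt he k rfl) k (by push_cast; ring)

theorem ladderH_mem_wt (he : e ∈ ρ.wt ν) : ρ.ladderH e ∈ ρ.wt ν :=
  H_mem_wt (D_mem_wt he 1 rfl) 1 (by push_cast; ring)

theorem L_L_neg_one_apply (ρ : QRep V) (k : ℤ) (v : V) :
    ρ.L k (ρ.L (-1) v) = ρ.L (-1) (ρ.L k v) - (k + 1 : ℂ) • ρ.L (k - 1) v := by
  have h := ρ.rel_LL k (-1) v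
  have h0 :
      (1 / 12 : ℂ) * ((-1 : ℤ) ^ 3 - (-1 : ℤ)) * (if k + -1 = 0 then 1 else 0) * ρ.c₀ = 0 := by
    norm_num
  rw [h0, zero_smul, add_zero, ← sub_eq_add_neg, sub_eq_iff_eq_add] at h
  rw [h]
  push_cast
  module

theorem L_one_D_add_one_apply (he : e ∈ ρ.wt ν) (n : ℕ) :
    ρ.L 1 (ρ.D (n + 1) e) = ρ.D n (ρ.ladderL 1 e) + (n * (n + 1 - 2 * ν)) • ρ.D n e := by
  induction n with
  | zero => simp [ladderL]
  | succ n ih =>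
    rw [D_succ_apply, L_L_neg_one_apply, ih, sub_self, mem_wt.mp (D_mem_wt he (n + 1) rfl), map_add,
      map_smul, ← D_succ_apply, ← D_succ_apply]
    push_cast
    module

theorem L_two_D_add_two_apply (he : e ∈ ρ.wt ν) (n : ℕ) :
    ρ.L 2 (ρ.D (n + 2) e) = ρ.D n (ρ.ladderL 2 e) - (3 * n : ℂ) • ρ.D n (ρ.ladderL 1 e)
      + (n * (n + 1) * (3 * ν - (n + 2))) • ρ.D n e := by
  induction n with
  | zero => simp [ladderL]
  | succ n ih =>
    rw [add_right_comm, D_succ_apply, L_L_neg_one_apply, ih, show (2 : ℤ) - 1 = 1 by norm_num,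
      L_one_D_add_one_apply he (n + 1)]
    simp only [map_add, map_sub, map_smul, ← D_succ_apply]
    push_cast
    module

theorem L_three_D_add_three_apply (he : e ∈ ρ.wt ν) (n : ℕ) :
    ρ.L 3 (ρ.D (n + 3) e) = ρ.D n (ρ.ladderL 3 e) - (4 * n : ℂ) • ρ.D n (ρ.ladderL 2 e)
      + (6 * n * (n + 1) : ℂ) • ρ.D n (ρ.ladderL 1 e)
      + (n * (n + 1) * (n + 2) * (n + 3 - 4 * ν)) • ρ.D n e := by
  induction n with
  | zero => simp [ladderL]
  | succ n ih =>
    rw [add_right_comm, D_succ_apply, L_L_neg_one_apply, ih, show (3 : ℤ) - 1 = 2 by norm_num,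
      show n + 3 = n + 1 + 2 by ring, L_two_D_add_two_apply he (n + 1)]
    simp only [map_add, map_sub, map_smul, ← D_succ_apply]
    push_cast
    module

theorem H_one_D_add_one_apply (hF : ∀ v, ρ.H 0 v = F • v) (n : ℕ) (v : V) :
    ρ.H 1 (ρ.D (n + 1) v) = ρ.D n (ρ.ladderH v) - (n * F) • ρ.D n v := by
  induction n with
  | zero => simp [ladderH]
  | succ n ih =>
    rw [D_succ_apply, H_L_apply, ih, show (-1 : ℤ) + 1 = 0 by norm_num, hF, map_sub, map_smul,
      ← D_succ_apply, ← D_succ_apply]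
    push_cast
    module

end Ladder

section Primary

/-- A sequence of operators with the same brackets with `L_{-1}`, `L_1` and `L_2` as `x_n = H_n`,
for `s = 0`, and as `x_n = L_{n-1}`, for `s = 1`. -/
structure IsPrimary (ρ : QRep V) (s : ℂ) (x : ℕ → V →ₗ[ℂ] V) : Prop where
  mem_wt : ∀ {μ v} (n : ℕ), v ∈ ρ.wt μ → x n v ∈ ρ.wt (μ + n - s)
  L_neg_one_apply : ∀ (n : ℕ) v, ρ.L (-1) (x n v) = x n (ρ.L (-1) v) + (n : ℂ) • x (n - 1) v
  L_one_apply : ∀ (n : ℕ) v, ρ.L 1 (x n v) = x n (ρ.L 1 v) + (n - 2 * s) • x (n + 1) v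
  L_two_apply : ∀ (n : ℕ) v, ρ.L 2 (x n v) = x n (ρ.L 2 v) + (n - 3 * s) • x (n + 2) v

theorem isPrimary_H (ρ : QRep V) : ρ.IsPrimary 0 (fun n : ℕ => ρ.H (n : ℤ)) where
  mem_wt n hv := H_mem_wt hv n (by push_cast; ring)
  L_neg_one_apply n v := by
    rcases n with _ | n
    · simp [L_H_apply]
    · simpa [add_comm] using ρ.L_H_apply (-1) (n + 1) v
  L_one_apply n v := by simpa [add_comm] using ρ.L_H_apply 1 n v
  L_two_apply n v := by simpa [add_comm] using ρ.L_H_apply 2 n v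

theorem isPrimary_L (ρ : QRep V) : ρ.IsPrimary 1 (fun n : ℕ => ρ.L ((n : ℤ) - 1)) where
  mem_wt n hv := L_mem_wt hv (n - 1) (by push_cast; ring)
  L_neg_one_apply n v := by
    rcases n with _ | n
    · simp
    · rw [L_L_neg_one_apply]
      push_cast
      simp
  L_one_apply n v := by
    rcases n with _ | n
    · have h := ρ.L_L_neg_one_apply 1 v
      simp only [sub_self] at h
      simp only [Nat.cast_zero, zero_sub, h, zero_add, Nat.cast_one, sub_self]
      push_cast
      module
    · rw [ρ.L_L_apply (by push_cast; omega),
        show (1 : ℤ) + ((n + 1 : ℕ) - 1) = (n + 1 + 1 : ℕ) - 1 by push_cast; ring]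
      push_cast
      module
  L_two_apply n v := by
    rw [ρ.L_L_apply (by omega), show (2 : ℤ) + (n - 1) = (n + 2 : ℕ) - 1 by push_cast; ring]
    push_cast
    module

attribute [local instance] sequenceModule isScalarTower_sequence smulCommClass_sequence

/-- The sequence `n ↦ (-1) ^ n / n! • x_n L_{-1} ^ (n + k) v`, a formal solution of the equation
`L_{-1} S_k = (1 - X) S_{k + 1}`. -/
noncomputable def primarySeq (ρ : QRep V) (x : ℕ → V →ₗ[ℂ] V) (k : ℕ) : V →ₗ[ℂ] ℕ → V :=
  LinearMap.pi fun n => ((-1) ^ n / n.factorial : ℂ) • (x n ∘ₗ ρ.D (n + k))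

variable {ρ : QRep V} {s ν F : ℂ} {x : ℕ → V →ₗ[ℂ] V} {e : V}

theorem primarySeq_apply (ρ : QRep V) (x : ℕ → V →ₗ[ℂ] V) (k : ℕ) (v : V) (n : ℕ) :
    ρ.primarySeq x k v n = ((-1) ^ n / n.factorial : ℂ) • x n (ρ.D (n + k) v) :=
  rfl

theorem coeff_smul_apply_succ (ρ : QRep V) (x : ℕ → V →ₗ[ℂ] V) (v : V) (n : ℕ) :
    ((-1) ^ n / n.factorial : ℂ) • x (n + 1) (ρ.D (n + 1) v)
      = -((n + 1 : ℂ) • ρ.primarySeq x 0 v (n + 1)) := by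
  rw [primarySeq_apply, smul_smul, ← neg_smul, Nat.factorial_succ, add_zero]
  congr 1
  have := Nat.cast_add_one_ne_zero (R := ℂ) n
  push_cast
  field_simp
  ring

theorem coeff_smul_apply_add_two (ρ : QRep V) (x : ℕ → V →ₗ[ℂ] V) (v : V) (n : ℕ) :
    ((-1) ^ n / n.factorial : ℂ) • x (n + 2) (ρ.D (n + 2) v)
      = ((n + 1) * (n + 2) : ℂ) • ρ.primarySeq x 0 v (n + 2) := by
  rw [primarySeq_apply, smul_smul, Nat.factorial_succ, Nat.factorial_succ, add_zero]
  congr 1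
  have h₁ := Nat.cast_add_one_ne_zero (R := ℂ) n
  have h₂ : (n + 1 + 1 : ℂ) ≠ 0 := mod_cast (n + 1).succ_ne_zero
  push_cast
  field_simp
  ring

namespace IsPrimary

theorem D_smul_primarySeq (hx : ρ.IsPrimary s x) (k : ℕ) (v : V) :
    ρ.D k • ρ.primarySeq x 0 v = ((1 - X) ^ k : ℂ[X]) • ρ.primarySeq x k v := by
  have hstep (k : ℕ) :
      ρ.L (-1) • ρ.primarySeq x k v = (1 - X : ℂ[X]) • ρ.primarySeq x (k + 1) v := by
    funext n
    rw [sub_smul, one_smul, Pi.sub_apply, Pi.smul_apply, Module.End.smul_def, primarySeq_apply,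
      map_smul, hx.L_neg_one_apply, ← D_succ_apply, primarySeq_apply]
    rcases n with _ | n
    · simp [X_smul_apply_zero]
    · rw [X_smul_apply_succ, primarySeq_apply, Nat.factorial_succ, Nat.add_sub_cancel,
        show n + (k + 1) = n + 1 + k by ring, ← add_assoc]
      have := Nat.cast_add_one_ne_zero (R := ℂ) n
      have := Nat.cast_ne_zero (R := ℂ).mpr n.factorial_ne_zero
      push_cast
      match_scalars <;> field_simp
      ring
  induction k with
  | zero => funext n; simp
  | succ k ih =>
    rw [D, pow_succ', mul_smul, ← D, ih, smul_comm (ρ.L (-1)), hstep, pow_succ, mul_smul]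

theorem comp_D_smul_primarySeq (hx : ρ.IsPrimary s x) (A : Module.End ℂ V) (k : ℕ) (v : V) :
    (A ∘ₗ ρ.D k) • ρ.primarySeq x 0 v = ((1 - X) ^ k : ℂ[X]) • A • ρ.primarySeq x k v := by
  rw [← Module.End.mul_eq_comp, mul_smul, hx.D_smul_primarySeq, smul_comm A]

local notation "δ" => indexMul ℂ V
local notation "S" => primarySeq ρ x

theorem ladderL_one_relation (hx : ρ.IsPrimary s x) (he : e ∈ ρ.wt ν) :
    (X : ℂ[X]) • ρ.ladderL 1 • S 0 e = (1 - X : ℂ[X]) • ((X : ℂ[X]) • (S 0 (ρ.ladderL 1 e) +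
      δ (δ (S 0 e)) + (1 - 2 * ν) • δ (S 0 e)) - δ (δ (S 0 e)) + (1 + 2 * s) • δ (S 0 e)) := by
  have h : (X : ℂ[X]) • ρ.L 1 • S 1 e = (X : ℂ[X]) • (S 0 (ρ.ladderL 1 e) + δ (δ (S 0 e)) +
      (1 - 2 * ν) • δ (S 0 e)) - δ (δ (S 0 e)) + (1 + 2 * s) • δ (S 0 e) := by
    funext n
    rcases n with _ | n
    · simp [X_smul_apply_zero, indexMul]
    · rw [X_smul_apply_succ, Pi.smul_apply, Module.End.smul_def, primarySeq_apply, map_smul,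
        hx.L_one_apply, L_one_D_add_one_apply he, smul_add, smul_comm _ (_ - _),
        coeff_smul_apply_succ]
      simp only [Pi.add_apply, Pi.sub_apply, Pi.smul_apply, X_smul_apply_succ, indexMul,
        LinearMap.pi_apply, LinearMap.smul_apply, LinearMap.proj_apply, map_add, map_smul,
        primarySeq_apply, add_zero]
      push_cast
      module
  rw [← h, smul_comm (1 - X : ℂ[X])]
  exact congrArg _ (by simpa [ladderL] using hx.comp_D_smul_primarySeq (ρ.L 1) 1 e)

theorem ladderL_two_relation (hx : ρ.IsPrimary s x) (he : e ∈ ρ.wt ν) :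
    (X ^ 2 : ℂ[X]) • ρ.ladderL 2 • S 0 e = ((1 - X) ^ 2 : ℂ[X]) • ((X ^ 2 : ℂ[X]) •
      (S 0 (ρ.ladderL 2 e) - (3 : ℂ[X]) • δ (S 0 (ρ.ladderL 1 e)) - δ (δ (δ (S 0 e))) +
        (3 * ν - 3) • δ (δ (S 0 e)) + (3 * ν - 2) • δ (S 0 e)) +
      δ (δ (δ (S 0 e))) + (-(3 + 3 * s)) • δ (δ (S 0 e)) + (2 + 3 * s) • δ (S 0 e)) := by
  have h : (X ^ 2 : ℂ[X]) • ρ.L 2 • S 2 e = (X ^ 2 : ℂ[X]) •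
      (S 0 (ρ.ladderL 2 e) - (3 : ℂ[X]) • δ (S 0 (ρ.ladderL 1 e)) - δ (δ (δ (S 0 e))) +
        (3 * ν - 3) • δ (δ (S 0 e)) + (3 * ν - 2) • δ (S 0 e)) +
      δ (δ (δ (S 0 e))) + (-(3 + 3 * s)) • δ (δ (S 0 e)) + (2 + 3 * s) • δ (S 0 e) := by
    rw [pow_two, mul_smul, mul_smul, ofNat_smul_eq_nsmul]
    funext n
    rcases n with _ | _ | n
    · simp [X_smul_apply_zero, indexMul]
    · simp [X_smul_apply_zero, X_smul_apply_succ, indexMul]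
      module
    · rw [X_smul_apply_succ, X_smul_apply_succ, Pi.smul_apply, Module.End.smul_def,
        primarySeq_apply, map_smul, hx.L_two_apply, L_two_D_add_two_apply he, smul_add,
        smul_comm _ (_ - _), coeff_smul_apply_add_two]
      simp only [Pi.add_apply, Pi.sub_apply, Pi.smul_apply, X_smul_apply_succ, indexMul,
        LinearMap.pi_apply, LinearMap.smul_apply, LinearMap.proj_apply, map_add, map_sub, map_smul,
        primarySeq_apply, add_zero]
      push_cast
      module
  rw [← h, smul_comm ((1 - X) ^ 2 : ℂ[X])]
  exact congrArg _ (hx.comp_D_smul_primarySeq (ρ.L 2) 2 e)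

theorem ladderH_relation (hx : ρ.IsPrimary s x) (hF : ∀ v, ρ.H 0 v = F • v)
    (h : ∀ n, ρ.H 1 (x n (ρ.D (n + 1) e)) = x n (ρ.H 1 (ρ.D (n + 1) e))) :
    ρ.ladderH • S 0 e = (1 - X : ℂ[X]) • (S 0 (ρ.ladderH e) - F • δ (S 0 e)) := by
  have h' : ρ.H 1 • S 1 e = S 0 (ρ.ladderH e) - F • δ (S 0 e) := by
    funext n
    rw [Pi.smul_apply, Module.End.smul_def, primarySeq_apply, map_smul, h,
      H_one_D_add_one_apply hF]
    simp only [Pi.sub_apply, Pi.smul_apply, indexMul, LinearMap.pi_apply, LinearMap.smul_apply,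
      LinearMap.proj_apply, map_sub, map_smul, primarySeq_apply, add_zero]
    module
  rw [← h']
  simpa [ladderH] using hx.comp_D_smul_primarySeq (ρ.H 1) 1 e

end IsPrimary

end Primary

section LadderEigenvector

variable {ρ : QRep V} {s ν F : ℂ} {x : ℕ → V →ₗ[ℂ] V}

/-- A common eigenvector of weight `ν` of the operators `L_1 L_{-1}`, `L_2 L_{-1} ^ 2` and
`H_1 L_{-1}`, with the eigenvalues of the module of the intermediate series of parameters `β`
and `F`. -/
structure IsLadderEigenvector (ρ : QRep V) (ν β F : ℂ) (ε : V) : Prop where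
  mem_wt : ε ∈ ρ.wt ν
  ne_zero : ε ≠ 0
  ladderL_one : ρ.ladderL 1 ε = ((ν - β) * (ν - 1 + β)) • ε
  ladderL_two : ρ.ladderL 2 ε = ((ν - β) * (ν - 1 - β) * (ν - 2 + 2 * β)) • ε
  ladderH : ρ.ladderH ε = (F * (ν - β)) • ε

attribute [local instance] sequenceModule isScalarTower_sequence smulCommClass_sequence

theorem IsPrimary.exists_isLadderEigenvector (hx : ρ.IsPrimary s x)
    (hfin : ∀ μ, FiniteDimensional ℂ (ρ.wt μ)) (hF : ∀ v, ρ.H 0 v = F • v) {n : ℕ} {e : V}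
    (he : e ∈ ρ.wt ν) (hne : x n (ρ.D n e) ≠ 0)
    (h : ∀ e ∈ ρ.wt ν, ∀ n, ρ.H 1 (x n (ρ.D (n + 1) e)) = x n (ρ.H 1 (ρ.D (n + 1) e))) :
    ∃ β ε, ρ.IsLadderEigenvector (ν - s) β F ε := by
  have hmem (n : ℕ) (e : V) (he : e ∈ ρ.wt ν) : ρ.primarySeq x 0 e n ∈ ρ.wt (ν - s) :=
    Submodule.smul_mem _ _ (by simpa using hx.mem_wt n (D_mem_wt he n rfl))
  let U : ρ.wt ν →ₗ[ℂ] ℕ → ρ.wt (ν - s) :=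
    LinearMap.pi fun n => (LinearMap.proj n ∘ₗ ρ.primarySeq x 0).restrict (hmem n)
  let Φ := (ρ.wt (ν - s)).subtype.compLeft ℕ
  have hΦ : Function.Injective Φ := fun m m' hm => funext fun n => Subtype.ext (congrFun hm n)
  have hU : U ≠ 0 := fun hU => hne <| by
    have : ρ.primarySeq x 0 e n = 0 :=
      congrArg Subtype.val (congrFun (LinearMap.congr_fun hU ⟨e, he⟩) n)
    simpa [primarySeq_apply, Nat.factorial_ne_zero] using this
  let res (A : V →ₗ[ℂ] V) (hA : ∀ {τ v}, v ∈ ρ.wt τ → A v ∈ ρ.wt τ) (τ : ℂ) :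
    Module.End ℂ (ρ.wt τ) := A.restrict fun _ => hA
  have hres (A hA) (m : ℕ → ρ.wt (ν - s)) : Φ (res A hA (ν - s) • m) = A • Φ m := rfl
  have hUΦ (e) : Φ (U e) = ρ.primarySeq x 0 e := rfl
  obtain ⟨t, w, hw, h₁, h₂, h₃⟩ := exists_common_eigenvector_of_relations hU
    (a := 1 - 2 * ν) (b := 1 + 2 * s) (a₂ := 3 * ν - 3) (a' := 3 * ν - 2) (b₂ := -(3 + 3 * s))
    (b' := 2 + 3 * s) (C₁ := res (ρ.ladderL 1) (ladderL_mem_wt 1) ν)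
    (C₂ := res (ρ.ladderL 2) (ladderL_mem_wt 2) ν) (C₃ := res ρ.ladderH ladderH_mem_wt ν)
    (c₁ := res (ρ.ladderL 1) (ladderL_mem_wt 1) _) (c₂ := res (ρ.ladderL 2) (ladderL_mem_wt 2) _)
    (c₃ := res ρ.ladderH ladderH_mem_wt _)
    (fun e => hΦ <| by
      simp only [Φ, map_add, map_sub, map_smul, compLeft_smul, compLeft_indexMul, hres, hUΦ]
      exact hx.ladderL_one_relation e.2)
    (fun e => hΦ <| by
      simp only [Φ, map_add, map_sub, map_smul, compLeft_smul, compLeft_indexMul, hres, hUΦ]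
      exact hx.ladderL_two_relation e.2)
    (fun e => hΦ <| by
      simp only [Φ, map_sub, map_smul, compLeft_smul, compLeft_indexMul, hres, hUΦ]
      exact hx.ladderH_relation hF (h e e.2))
  refine ⟨t + (ν - s), w, w.2, by simpa using hw, (congrArg Subtype.val h₁).trans ?_,
    (congrArg Subtype.val h₂).trans ?_, (congrArg Subtype.val h₃).trans ?_⟩
  all_goals
    rw [Submodule.coe_smul]
    congr 1
    ring

theorem IsTail.exists_isLadderEigenvector (hν : ρ.IsTail ν)
    (hfin : ∀ μ, FiniteDimensional ℂ (ρ.wt μ)) (hF : ∀ v, ρ.H 0 v = F • v) :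
    ∃ ν' β ε, ρ.IsTail ν' ∧ ρ.IsLadderEigenvector ν' β F ε := by
  by_cases hH : ∃ n j : ℕ, ∃ w ∈ ρ.wt (ν - j - n), ρ.H n w ≠ 0
  · obtain ⟨n, j, w, hw, hne⟩ := hH
    obtain ⟨e, he, rfl⟩ := (hν.sub_natCast j).exists_D_eq hw
    obtain ⟨β, ε, hε⟩ := ρ.isPrimary_H.exists_isLadderEigenvector hfin hF he hne
      fun e _ n => ρ.H_H_apply (by omega) _
    exact ⟨_, β, ε, hν.sub_natCast j, by simpa using hε⟩
  · push Not at hH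
    obtain ⟨e, he, hne⟩ := exists_mem_ne_zero_of_ne_bot hν.wt_ne_bot
    have hx₀ : ρ.L ((0 : ℕ) - 1) (ρ.D 0 e) ≠ 0 := fun h0 =>
      hne (hν.injective 0 e (by simpa using he) (by simpa using h0))
    obtain ⟨β, ε, hε⟩ := ρ.isPrimary_L.exists_isLadderEigenvector hfin hF he hx₀
      fun e he n => by
        rw [H_L_apply, sub_add_cancel, hH n 1 _ (D_mem_wt he (n + 1) (by push_cast; ring)),
          smul_zero, sub_zero]
    exact ⟨_, β, ε, by simpa using hν.sub_natCast 1, hε⟩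

end LadderEigenvector

end QRep

section PolynomialPencil

variable {K E ι : Type*} [Field K] [AddCommGroup E] [Module K E] [FiniteDimensional K E] [Fintype ι]

theorem finite_setOf_not_isUnit_sum_eval_smul (p : ι → K[X]) (A : ι → Module.End K E)
    (h : IsUnit (∑ i, (p i).eval 0 • A i)) : {t | ¬ IsUnit (∑ i, (p i).eval t • A i)}.Finite := by
  let b := Module.finBasis K E
  let M : Matrix _ _ K[X] := ∑ i, p i • (LinearMap.toMatrix b b (A i)).map C
  have hdet (t : K) : M.det.eval t = LinearMap.det (∑ i, (p i).eval t • A i) := by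
    rw [← LinearMap.det_toMatrix b, ← coe_evalRingHom, RingHom.map_det]
    congr 1
    ext i j
    simp [M, Matrix.sum_apply]
  have hM : M.det ≠ 0 := fun h0 => by
    have := (LinearMap.isUnit_iff_isUnit_det _).mp h
    simp [← hdet, h0] at this
  refine (finite_setOfPred_isRoot hM).subset fun t ht => ?_
  by_contra h0
  exact ht ((LinearMap.isUnit_iff_isUnit_det _).mpr (hdet t ▸ isUnit_iff_ne_zero.mpr h0))

theorem eventually_isUnit_sum_eval_inv_natCast_smul [CharZero K] (p : ι → K[X])
    (A : ι → Module.End K E) (h : IsUnit (∑ i, (p i).eval 0 • A i)) :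
    ∀ᶠ m : ℕ in atTop, IsUnit (∑ i, (p i).eval (m : K)⁻¹ • A i) := by
  rw [← Nat.cofinite_eq_atTop]
  have hinj : Function.Injective fun m : ℕ => (m : K)⁻¹ := inv_injective.comp Nat.cast_injective
  exact hinj.tendsto_cofinite.eventually (finite_setOf_not_isUnit_sum_eval_smul p A h)

theorem eventually_eq_zero_of_eval_add_sum_eq_zero [CharZero K] {f : K[X]} (hf₀ : f.coeff 0 = 0)
    (hf₁ : f.coeff 1 ≠ 0) (p : ι → K[X]) (A : ι → Module.End K E) :
    ∀ᶠ m : ℕ in atTop, ∀ e : E, f.eval (m : K)⁻¹ • e +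
      (m : K)⁻¹ ^ 2 • ∑ i, (p i).eval (m : K)⁻¹ • A i e = 0 → e = 0 := by
  have hunit := eventually_isUnit_sum_eval_inv_natCast_smul
    (fun i : Option ι => i.elim f.divX (X * p ·)) (fun i => i.elim 1 A) <| by
      simpa [Fintype.sum_option, ← coeff_zero_eq_eval_zero, coeff_divX,
        Algebra.algebraMap_eq_smul_one] using
        isUnit_iff_ne_zero.mpr hf₁ |>.map (algebraMap K (Module.End K E))
  filter_upwards [hunit, eventually_ne_atTop 0] with m hm hm0 e he
  have hm0' : (m : K) ≠ 0 := Nat.cast_ne_zero.mpr hm0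
  have hf : f.eval (m : K)⁻¹ = (m : K)⁻¹ * f.divX.eval (m : K)⁻¹ := by
    conv_lhs => rw [← divX_mul_X_add f, hf₀]
    simp [mul_comm]
  rw [hf, mul_smul, pow_two, mul_smul, ← smul_add, smul_eq_zero_iff_right (inv_ne_zero hm0')] at he
  refine (injective_iff_map_eq_zero _).mp ((Module.End.isUnit_iff _).mp hm).injective e ?_
  simpa [Fintype.sum_option, Finset.smul_sum, mul_smul] using he

/-- With `t = 1 / m` the difference of the two sides, multiplied by `t ^ 7`, is `-2 J t • e` up to
terms of order `t ^ 2`. -/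
theorem eventually_eq_zero_of_mul_cubic_eq [CharZero K] (C₁ C₂ C₃ : Module.End K E) (ν β : K)
    {J : K} (hJ : J ≠ 0) : ∀ᶠ m : ℕ in atTop, ∀ x : K, x = ν - m - 3 + J → ∀ e : E,
      (x + 3 * β) • (C₁ + algebraMap K _ (m * (m + 1 - 2 * ν)))
        ((C₁ + algebraMap K _ ((m + 1) * (m + 2 - 2 * ν)))
          ((C₁ + algebraMap K _ ((m + 2) * (m + 3 - 2 * ν))) e)) =
      ((x + β) * (x + 1 + β) * (x + 2 + β)) •
        (C₃ e - (4 * m : K) • C₂ e + (6 * m * (m + 1) : K) • C₁ e +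
          (m * (m + 1) * (m + 2) * (m + 3 - 4 * ν)) • e) → e = 0 := by
  let a : K[X] := C (ν + 3 * β + J - 3) * X - 1
  let b : K[X] := (C (ν + β + J - 3) * X - 1) * (C (ν + β + J - 2) * X - 1) *
    (C (ν + β + J - 1) * X - 1)
  let q₀ : K[X] := 1 + C (1 - 2 * ν) * X
  let q₁ : K[X] := (1 + X) * (1 + C (2 - 2 * ν) * X)
  let q₂ : K[X] := (1 + 2 * X) * (1 + C (3 - 2 * ν) * X)
  let r : K[X] := (1 + X) * (1 + 2 * X) * (1 + C (3 - 4 * ν) * X)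
  let f : K[X] := a * q₀ * q₁ * q₂ - b * r
  have hf₀ : f.coeff 0 = 0 := by simp [f, a, b, q₀, q₁, q₂, r, coeff_zero_eq_eval_zero]
  have hf₁ : f.coeff 1 = -2 * J := by
    have hder : (derivative f).eval 0 = -2 * J := by
      simp [f, a, b, q₀, q₁, q₂, r]
      ring
    rw [← hder, ← coeff_zero_eq_eval_zero, coeff_derivative]
    simp
  filter_upwards [eventually_ne_atTop 0,
    eventually_eq_zero_of_eval_add_sum_eq_zero hf₀ (by simpa [hf₁] using hJ)
      ![a * (q₀ * q₁ + q₀ * q₂ + q₁ * q₂) - 6 * (1 + X) * b, a * (q₀ + q₁ + q₂) * X ^ 2, a * X ^ 4,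
        4 * X * b, -X ^ 2 * b] ![C₁, C₁ ^ 2, C₁ ^ 3, C₂, C₃]] with m hm0 hm x hx e he
  have hm0' : (m : K) ≠ 0 := Nat.cast_ne_zero.mpr hm0
  refine hm e (Eq.trans ?_ (smul_eq_zero_of_right ((m : K)⁻¹ ^ 7) (sub_eq_zero.mpr he)))
  simp only [Fin.sum_univ_succ, Fin.sum_univ_zero, Matrix.cons_val_zero, Matrix.cons_val_succ,
    pow_succ, pow_zero, one_mul, add_zero, Module.End.mul_apply, LinearMap.add_apply, map_add,
    map_smul, Module.algebraMap_end_apply]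
  simp only [f, a, b, q₀, q₁, q₂, r, hx, eval_add, eval_sub, eval_mul, eval_neg, eval_C, eval_X,
    eval_one, eval_ofNat]
  match_scalars <;> field_simp <;> ring

end PolynomialPencil

namespace QRep

variable {V : Type} [AddCommGroup V] [Module ℂ V] {ρ : QRep V}

theorem IsTail.eventually_eq_zero_of_L_one_pow_three_eq {ν : ℂ} (hν : ρ.IsTail ν)
    [FiniteDimensional ℂ (ρ.wt ν)] (β : ℂ) {J : ℕ} (hJ : J ≠ 0) :
    ∀ᶠ n : ℕ in atTop, ∀ x : ℂ, x = ν - n → ∀ y ∈ ρ.wt (x - J),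
      (x + 3 * β) • ρ.L 1 (ρ.L 1 (ρ.L 1 y)) =
        ((x + β) * (x + 1 + β) * (x + 2 + β)) • ρ.L 3 y → y = 0 := by
  let C (k : ℕ) : Module.End ℂ (ρ.wt ν) := (ρ.ladderL k).restrict fun _ => ladderL_mem_wt k
  have hC (k : ℕ) (e : ρ.wt ν) : ρ.ladderL k e = (C k e : V) := rfl
  have hL₁ (k : ℕ) (c : ℂ) (hc : k * (k + 1 - 2 * ν) = c) (e : ρ.wt ν) :
      ρ.L 1 (ρ.D (k + 1) e) = ρ.D k (((C 1 + algebraMap ℂ _ c) e : ρ.wt ν) : V) := by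
    rw [L_one_D_add_one_apply e.2, hC, hc, ← map_smul, ← map_add]
    rfl
  obtain ⟨m₀, hm₀⟩ := eventually_atTop.mp
    (eventually_eq_zero_of_mul_cubic_eq (C 1) (C 2) (C 3) ν β (Nat.cast_ne_zero.mpr hJ))
  filter_upwards [eventually_ge_atTop (m₀ + 3)] with n hn x hx y hy h
  obtain ⟨m, hm⟩ := Nat.exists_eq_add_of_le (show 3 ≤ n + J by omega)
  have hx' : x = ν - m - 3 + J := by
    have : (n + J : ℂ) = 3 + m := mod_cast hm
    linear_combination hx - this
  obtain ⟨e, he, rfl⟩ := hν.exists_D_eq (n := m + 3) (w := y) (by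
    convert hy using 2
    rw [hx']
    push_cast
    ring)
  lift e to ρ.wt ν using he
  have hinj (u v : ρ.wt ν) (huv : ρ.D m u = ρ.D m v) : u = v :=
    sub_eq_zero.mp (Subtype.ext (hν.eq_zero_of_D_eq_zero (n := m) (u - v).2 (by simp [huv])))
  have he : e = 0 := hm₀ m (by omega) x hx' e <| hinj _ _ <| by
    rw [hL₁ (m + 2) ((m + 2) * (m + 3 - 2 * ν)) (by push_cast; ring),
      hL₁ (m + 1) ((m + 1) * (m + 2 - 2 * ν)) (by push_cast; ring), hL₁ m _ rfl,
      L_three_D_add_three_apply e.2] at h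
    simp only [hC, ← map_smul (ρ.D m), ← map_add (ρ.D m), ← map_sub (ρ.D m)] at h
    exact h
  simp [he]

end QRep

namespace QRep

section DensityRay

variable {V : Type} [AddCommGroup V] [Module ℂ V] {ρ : QRep V} {ν β F : ℂ} {v : ℤ → V} {N : ℤ}

/-- `L k` acts on the vectors `v j`, `j ≤ N`, as it does on the basis vectors `t ^ (ν + j) dt ^ β`
of a module of tensor densities. -/
def LActsAsDensity (ρ : QRep V) (ν β : ℂ) (v : ℤ → V) (N k : ℤ) : Prop :=
  ∀ j ≤ N, j + k ≤ N → ρ.L k (v j) = (ν + j + k * β) • v (j + k)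

/-- `H k` acts on the vectors `v j`, `j ≤ N`, as `F` times the shift by `k`. -/
def HActsAsDensity (ρ : QRep V) (F : ℂ) (v : ℤ → V) (N k : ℤ) : Prop :=
  ∀ j ≤ N, j + k ≤ N → ρ.H k (v j) = F • v (j + k)

theorem LActsAsDensity.mono {k N' : ℤ} (h : ρ.LActsAsDensity ν β v N k) (hN : N' ≤ N) :
    ρ.LActsAsDensity ν β v N' k :=
  fun j hj hjk => h j (hj.trans hN) (hjk.trans hN)

theorem HActsAsDensity.mono {k N' : ℤ} (h : ρ.HActsAsDensity F v N k) (hN : N' ≤ N) :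
    ρ.HActsAsDensity F v N' k :=
  fun j hj hjk => h j (hj.trans hN) (hjk.trans hN)

theorem LActsAsDensity.add {k l : ℤ} (hk : ρ.LActsAsDensity ν β v N k)
    (hl : ρ.LActsAsDensity ν β v N l) (hkl : 0 < k * l) (hne : k ≠ l) :
    ρ.LActsAsDensity ν β v N (k + l) := by
  intro j hj hjkl
  have hsign := pos_and_pos_or_neg_and_neg_of_mul_pos hkl
  have hne' : (l - k : ℂ) ≠ 0 := sub_ne_zero.mpr (mod_cast hne.symm)
  have hcomm := L_L_apply ρ (m := k) (n := l) (by omega) (v j)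
  rw [hl j hj (by omega), hk j hj (by omega), map_smul, map_smul, hk _ (by omega) (by omega),
    hl _ (by omega) (by omega), ← sub_eq_iff_eq_add',
    add_assoc j, add_assoc j, add_comm l] at hcomm
  refine smul_right_injective V hne' ?_
  simp only [← hcomm]
  push_cast
  module

theorem HActsAsDensity.add {k l : ℤ} (hl : ρ.HActsAsDensity F v N l)
    (hk : ρ.LActsAsDensity ν β v N k) (hkl : 0 < k * l) :
    ρ.HActsAsDensity F v N (k + l) := by
  intro j hj hjkl
  have hsign := pos_and_pos_or_neg_and_neg_of_mul_pos hkl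
  have hl₀ : (l : ℂ) ≠ 0 := mod_cast right_ne_zero_of_mul hkl.ne'
  have hcomm := L_H_apply ρ k l (v j)
  rw [hl j hj (by omega), hk j hj (by omega), map_smul, map_smul, hk _ (by omega) (by omega),
    hl _ (by omega) (by omega), ← sub_eq_iff_eq_add',
    add_assoc j, add_assoc j, add_comm l] at hcomm
  refine smul_right_injective V hl₀ ?_
  simp only [← hcomm]
  push_cast
  module

theorem mul_succ_mul_pos {s : ℤ} (hs : s ≠ 0) (n : ℕ) : 0 < s * ((n + 1) * s) := by
  rw [mul_left_comm]
  exact mul_pos (by positivity) (mul_self_pos.mpr hs)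

theorem LActsAsDensity.succ_mul {s : ℤ} (hs : s ≠ 0) (h₁ : ρ.LActsAsDensity ν β v N s)
    (h₂ : ρ.LActsAsDensity ν β v N (2 * s)) (n : ℕ) : ρ.LActsAsDensity ν β v N ((n + 1) * s) := by
  induction n with
  | zero => simpa using h₁
  | succ n ih =>
    rcases eq_or_ne n 0 with rfl | hn
    · simpa [one_add_one_eq_two] using h₂
    · convert h₁.add ih (mul_succ_mul_pos hs n) (by simpa [hs, eq_comm] using hn) using 1
      push_cast
      ring

theorem HActsAsDensity.succ_mul {s : ℤ} (hs : s ≠ 0) (h₁ : ρ.HActsAsDensity F v N s)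
    (hL : ρ.LActsAsDensity ν β v N s) (n : ℕ) : ρ.HActsAsDensity F v N ((n + 1) * s) := by
  induction n with
  | zero => simpa using h₁
  | succ n ih =>
    convert ih.add hL (mul_succ_mul_pos hs n) using 1
    push_cast
    ring

/-- Near `-∞`, the vectors `v j` span a module of the intermediate series: a tensor density
module with parameters `ν`, `β` on which `H` acts through `F` times the shifts. -/
structure IsDensityRay (ρ : QRep V) (ν β F : ℂ) (v : ℤ → V) (N : ℤ) : Prop where
  ne_zero : ∀ j ≤ N, v j ≠ 0
  mem_wt : ∀ j ≤ N, v j ∈ ρ.wt (ν + j)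
  L_apply : ∀ k, ρ.LActsAsDensity ν β v N k
  H_apply : ∀ k, ρ.HActsAsDensity F v N k

theorem IsDensityRay.of_generators (hv : ∀ j ≤ N, v j ≠ 0) (hwt : ∀ j ≤ N, v j ∈ ρ.wt (ν + j))
    (hF : ∀ w, ρ.H 0 w = F • w)
    (hL₁ : ρ.LActsAsDensity ν β v N 1) (hL₂ : ρ.LActsAsDensity ν β v N 2)
    (hL₁' : ρ.LActsAsDensity ν β v N (-1)) (hL₂' : ρ.LActsAsDensity ν β v N (-2))
    (hH₁ : ρ.HActsAsDensity F v N 1) (hH₁' : ρ.HActsAsDensity F v N (-1)) :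
    ρ.IsDensityRay ν β F v N where
  ne_zero := hv
  mem_wt := hwt
  L_apply k := by
    rcases lt_trichotomy k 0 with hk | rfl | hk
    · convert hL₁'.succ_mul (by norm_num) hL₂' (-k - 1).toNat using 1
      omega
    · intro j hj _
      simpa using QRep.mem_wt.mp (hwt j hj)
    · convert hL₁.succ_mul one_ne_zero hL₂ (k - 1).toNat using 1
      omega
  H_apply k := by
    rcases lt_trichotomy k 0 with hk | rfl | hk
    · convert hH₁'.succ_mul (by norm_num) hL₁' (-k - 1).toNat using 1
      omega
    · intro j _ _
      simpa using hF (v j)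
    · convert hH₁.succ_mul one_ne_zero hL₁ (k - 1).toNat using 1
      omega

theorem exists_ne_zero_and_sub_natCast_mul_succ_eq (z : ℂ) :
    ∃ (n₀ : ℕ) (c : ℕ → ℂ), (∀ n, c n ≠ 0) ∧ ∀ n ≥ n₀, (z - n) * c (n + 1) = c n := by
  obtain ⟨n₀, hn₀⟩ := exists_nat_gt ‖z‖
  have hz (n : ℕ) (hn : n₀ ≤ n) : z - n ≠ 0 := by
    rintro h
    rw [sub_eq_zero.mp h, Complex.norm_natCast, Nat.cast_lt] at hn₀
    omega
  refine ⟨n₀, fun n => ∏ j ∈ Finset.Ico n₀ n, (z - j)⁻¹, fun n => ?_, fun n hn => ?_⟩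
  · exact Finset.prod_ne_zero_iff.mpr fun j hj => inv_ne_zero (hz j (Finset.mem_Ico.mp hj).1)
  · simp only
    rw [Finset.prod_Ico_succ_top hn, mul_comm, mul_assoc, inv_mul_cancel₀ (hz n hn), mul_one]

theorem IsLadderEigenvector.exists_generators {ε : V} (hε : ρ.IsLadderEigenvector ν β F ε)
    (hν : ρ.IsTail ν) (hF : ∀ w, ρ.H 0 w = F • w) :
    ∃ (v : ℤ → V) (N : ℤ), (∀ j ≤ N, v j ≠ 0) ∧ (∀ j ≤ N, v j ∈ ρ.wt (ν + j)) ∧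
      ρ.LActsAsDensity ν β v N (-1) ∧ ρ.LActsAsDensity ν β v N 1 ∧
      ρ.LActsAsDensity ν β v N 2 ∧ ρ.HActsAsDensity F v N 1 := by
  obtain ⟨n₀, c, hc₀, hc⟩ := exists_ne_zero_and_sub_natCast_mul_succ_eq (ν - β)
  let v (j : ℤ) : V := c (-j).toNat • ρ.D (-j).toNat ε
  have hv (n : ℕ) : v (-n) = c n • ρ.D n ε := by simp [v]
  have hnat (k : ℕ) {j : ℤ} (hj : j + k ≤ -n₀) : ∃ n ≥ n₀, j = -(n + k : ℕ) :=
    ⟨(-j - k).toNat, by omega, by omega⟩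
  refine ⟨v, -n₀, ?_, ?_, ?_, ?_, ?_, ?_⟩
  · rintro j hj
    obtain ⟨n, -, rfl⟩ := hnat 0 (by simpa using hj)
    exact hv n ▸ smul_ne_zero (hc₀ n) fun h => hε.ne_zero (hν.eq_zero_of_D_eq_zero hε.mem_wt h)
  · rintro j hj
    obtain ⟨n, -, rfl⟩ := hnat 0 (by simpa using hj)
    exact hv n ▸ smul_mem _ _ (D_mem_wt hε.mem_wt n (by push_cast; ring))
  · rintro j hj -
    obtain ⟨n, hn, rfl⟩ := hnat 0 (by simpa using hj)
    rw [add_zero, show -(n : ℤ) + -1 = -(n + 1 : ℕ) by push_cast; ring, hv, hv, map_smul,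
      ← D_succ_apply, ← hc n hn]
    push_cast
    module
  · rintro j - hj
    obtain ⟨n, hn, rfl⟩ := hnat 1 hj
    rw [show -((n + 1 : ℕ) : ℤ) + 1 = -n by push_cast; ring, hv, hv, map_smul,
      L_one_D_add_one_apply hε.mem_wt, hε.ladderL_one, map_smul, ← hc n hn]
    push_cast
    module
  · rintro j - hj
    obtain ⟨n, hn, rfl⟩ := hnat 2 hj
    rw [show -((n + 2 : ℕ) : ℤ) + 2 = -n by push_cast; ring, hv, hv, map_smul,
      L_two_D_add_two_apply hε.mem_wt, hε.ladderL_one, hε.ladderL_two, map_smul, map_smul,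
      ← hc n hn, ← hc (n + 1) (by omega)]
    push_cast
    module
  · rintro j - hj
    obtain ⟨n, hn, rfl⟩ := hnat 1 hj
    rw [show -((n + 1 : ℕ) : ℤ) + 1 = -n by push_cast; ring, hv, hv, map_smul,
      H_one_D_add_one_apply hF, hε.ladderH, map_smul, ← hc n hn]
    module

theorem IsTail.exists_eq_zero_of_L_one_L_three (hν : ρ.IsTail ν) [FiniteDimensional ℂ (ρ.wt ν)]
    {J : ℕ} (hJ : J ≠ 0) {y : ℤ → V} (hy : ∀ j ≤ N, y j ∈ ρ.wt (ν + j - J))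
    (h₁ : ∀ j, j + 1 ≤ N → ρ.L 1 (y j) = (ν + j + β) • y (j + 1))
    (h₃ : ∀ j, j + 3 ≤ N → ρ.L 3 (y j) = (ν + j + 3 * β) • y (j + 3)) :
    ∃ N' ≤ N, ∀ j ≤ N', y j = 0 := by
  obtain ⟨n₀, hn₀⟩ := eventually_atTop.mp (hν.eventually_eq_zero_of_L_one_pow_three_eq β hJ)
  refine ⟨min (-n₀) (N - 3), by omega, fun j hj => ?_⟩
  have hj' : ((-j).toNat : ℤ) = -j := by omega
  refine hn₀ (-j).toNat (by omega) (ν + j) ?_ (y j) (hy j (by omega)) ?_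
  · rw [← Int.cast_natCast (R := ℂ), hj']
    push_cast
    ring
  · rw [h₁ j (by omega), map_smul, map_smul, h₁ (j + 1) (by omega), map_smul,
      h₁ (j + 1 + 1) (by omega), h₃ j (by omega), show j + 1 + 1 + 1 = j + 3 by ring]
    push_cast
    module

theorem IsTail.exists_LActsAsDensity_neg_two (hν : ρ.IsTail ν) [FiniteDimensional ℂ (ρ.wt ν)]
    (hwt : ∀ j ≤ N, v j ∈ ρ.wt (ν + j)) (hL₁' : ρ.LActsAsDensity ν β v N (-1))
    (hL₁ : ρ.LActsAsDensity ν β v N 1) (hL₃ : ρ.LActsAsDensity ν β v N 3) :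
    ∃ N' ≤ N, ρ.LActsAsDensity ν β v N' (-2) := by
  obtain ⟨N', hN', hy⟩ := hν.exists_eq_zero_of_L_one_L_three (N := N) (β := β) two_ne_zero
    (y := fun j => ρ.L (-2) (v j) - (ν + j - 2 * β) • v (j - 2))
    (fun j hj => by
      refine sub_mem (L_mem_wt (hwt j hj) (-2) (by push_cast; ring)) (smul_mem _ _ ?_)
      convert hwt (j - 2) (by omega) using 2
      push_cast
      ring)
    (fun j hj => by
      rw [map_sub, map_smul, L_L_apply ρ (by norm_num), hL₁ j (by omega) hj,
        hL₁ (j - 2) (by omega) (by omega), map_smul, show (1 : ℤ) + -2 = -1 by norm_num,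
        hL₁' j (by omega) (by omega), show j - 2 + 1 = j + 1 - 2 by ring,
        show j + -1 = j + 1 - 2 by ring]
      push_cast
      module)
    (fun j hj => by
      rw [map_sub, map_smul, L_L_apply ρ (by norm_num), hL₃ j (by omega) hj,
        hL₃ (j - 2) (by omega) (by omega), map_smul, show (3 : ℤ) + -2 = 1 by norm_num,
        hL₁ j (by omega) (by omega), show j - 2 + 3 = j + 3 - 2 by ring,
        show j + 1 = j + 3 - 2 by ring]
      push_cast
      module)
  refine ⟨N', hN', fun j hj _ => (sub_eq_zero.mp (hy j hj)).trans ?_⟩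
  rw [← sub_eq_add_neg]
  push_cast
  module

theorem IsTail.exists_HActsAsDensity_neg_one (hν : ρ.IsTail ν) [FiniteDimensional ℂ (ρ.wt ν)]
    (hF : ∀ w, ρ.H 0 w = F • w) (hwt : ∀ j ≤ N, v j ∈ ρ.wt (ν + j))
    (hL₁ : ρ.LActsAsDensity ν β v N 1) (hL₃ : ρ.LActsAsDensity ν β v N 3)
    (hH₂ : ρ.HActsAsDensity F v N 2) :
    ∃ N' ≤ N, ρ.HActsAsDensity F v N' (-1) := by
  obtain ⟨N', hN', hy⟩ := hν.exists_eq_zero_of_L_one_L_three (N := N) (β := β) one_ne_zero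
    (y := fun j => ρ.H (-1) (v j) - F • v (j - 1))
    (fun j hj => by
      refine sub_mem (H_mem_wt (hwt j hj) (-1) (by push_cast; ring)) (smul_mem _ _ ?_)
      convert hwt (j - 1) (by omega) using 2
      push_cast
      ring)
    (fun j hj => by
      rw [map_sub, map_smul, L_H_apply, hL₁ j (by omega) hj,
        hL₁ (j - 1) (by omega) (by omega), map_smul, show (1 : ℤ) + -1 = 0 by norm_num,
        hF, show j - 1 + 1 = j by ring, show j + 1 - 1 = j by ring]
      push_cast
      module)
    (fun j hj => by
      rw [map_sub, map_smul, L_H_apply, hL₃ j (by omega) hj,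
        hL₃ (j - 1) (by omega) (by omega), map_smul, show (3 : ℤ) + -1 = 2 by norm_num,
        hH₂ j (by omega) (by omega), show j - 1 + 3 = j + 3 - 1 by ring,
        show j + 2 = j + 3 - 1 by ring]
      push_cast
      module)
  exact ⟨N', hN', fun j hj _ => sub_eq_zero.mp (hy j hj)⟩

theorem IsTail.exists_isDensityRay (hν : ρ.IsTail ν)
    (hfin : ∀ μ, FiniteDimensional ℂ (ρ.wt μ)) (hF : ∀ w, ρ.H 0 w = F • w) :
    ∃ ν' β v N, ρ.IsTail ν' ∧ ρ.IsDensityRay ν' β F v N := by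
  obtain ⟨ν', β, ε, hν', hε⟩ := hν.exists_isLadderEigenvector hfin hF
  have := hfin ν'
  obtain ⟨v, N, hv, hwt, hL₁', hL₁, hL₂, hH₁⟩ := hε.exists_generators hν' hF
  have hL₃ : ρ.LActsAsDensity ν' β v N 3 := hL₁.add hL₂ (by norm_num) (by norm_num)
  have hH₂ : ρ.HActsAsDensity F v N 2 := hH₁.add hL₁ (by norm_num)
  obtain ⟨N₁, hN₁, hL₂'⟩ := hν'.exists_LActsAsDensity_neg_two hwt hL₁' hL₁ hL₃
  obtain ⟨N₂, -, hH₁'⟩ := hν'.exists_HActsAsDensity_neg_one hF hwt hL₁ hL₃ hH₂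
  have h₁ : min N₁ N₂ ≤ N₁ := min_le_left _ _
  have h₂ : min N₁ N₂ ≤ N₂ := min_le_right _ _
  have h : min N₁ N₂ ≤ N := h₁.trans hN₁
  exact ⟨ν', β, v, min N₁ N₂, hν', .of_generators (fun j hj => hv j (hj.trans h))
    (fun j hj => hwt j (hj.trans h)) hF (hL₁.mono h) (hL₂.mono h) (hL₁'.mono h) (hL₂'.mono h₁)
    (hH₁.mono h) (hH₁'.mono h₂)⟩

end DensityRay

end QRep

section AsymptoticSpan

variable {K M N : Type*} [Field K] [AddCommGroup M] [Module K M] [AddCommGroup N] [Module K N]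

/-- The vectors `w` for which `T k w` is, as `k → -∞`, a fixed multiple of `u k`. -/
def eventuallyProportional (T : ℤ → M →ₗ[K] N) (u : ℤ → N) : Submodule K M where
  carrier := {w | ∃ γ : K, ∀ᶠ k in atBot, T k w = γ • u k}
  add_mem' := by
    rintro w w' ⟨γ, h⟩ ⟨γ', h'⟩
    refine ⟨γ + γ', ?_⟩
    filter_upwards [h, h'] with k hk hk'
    rw [map_add, hk, hk', add_smul]
  zero_mem' := ⟨0, .of_forall fun k => by simp⟩
  smul_mem' := by
    rintro c w ⟨γ, h⟩
    refine ⟨c * γ, ?_⟩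
    filter_upwards [h] with k hk
    rw [map_smul, hk, mul_smul]

theorem rank_le_one_of_le_eventuallyProportional {T : ℤ → M →ₗ[K] N} {u : ℤ → N}
    {E : Submodule K M} (hE : E ≤ eventuallyProportional T u) (hker : eventuallyKer T = ⊥) :
    Module.rank K E ≤ 1 := by
  have hzero {w : M} (h : ∀ᶠ k in atBot, T k w = 0) : w = 0 :=
    (Submodule.eq_bot_iff _).mp hker w h
  rcases eq_or_ne E ⊥ with rfl | hne
  · simp
  obtain ⟨w, hw, hw₀⟩ := E.exists_mem_ne_zero_of_ne_bot hne
  obtain ⟨γ, hγ⟩ := hE hw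
  have hγ₀ : γ ≠ 0 := by
    rintro rfl
    exact hw₀ (hzero (by simpa only [zero_smul] using hγ))
  refine (rank_submodule_le_one_iff' E).mpr ⟨w, fun x hx => mem_span_singleton.mpr ?_⟩
  obtain ⟨δ, hδ⟩ := hE hx
  refine ⟨δ / γ, sub_eq_zero.mp (hzero ?_)⟩
  filter_upwards [hγ, hδ] with k hγk hδk
  rw [map_sub, map_smul, hγk, hδk, smul_smul, div_mul_cancel₀ _ hγ₀, sub_self]

/-- The vectors `w` with `T k w ∈ Λ k` for `k` near `-∞`. -/
def eventuallyComap (T : ℤ → M →ₗ[K] N) (Λ : ℤ → Submodule K N) : Submodule K M where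
  carrier := {w | ∀ᶠ k in atBot, T k w ∈ Λ k}
  add_mem' h h' := by
    filter_upwards [h, h'] with k hk hk'
    rw [map_add]
    exact add_mem hk hk'
  zero_mem' := .of_forall fun k => by simp
  smul_mem' c w h := by
    filter_upwards [h] with k hk
    rw [map_smul]
    exact smul_mem _ _ hk

end AsymptoticSpan

section DensityFunctionalEquation

variable {K : Type*} [Field K]

theorem eventually_atBot_eval_intCast_ne_zero [CharZero K] {p : K[X]} (hp : p ≠ 0) :
    ∀ᶠ a : ℤ in atBot, p.eval (a : K) ≠ 0 :=
  ((finite_setOfPred_isRoot hp).preimage Int.cast_injective.injOn).eventually_cofinite_notMem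
    |>.filter_mono atBot_le_cofinite

variable {f : ℤ → K} {σ β : K} {r : ℤ}

theorem eventually_density_coeff_ne_zero [CharZero K] (hσ : σ ≠ 0) (β : K) :
    ∀ᶠ a : ℤ in atBot, σ + a * β ≠ 0 ∧
      σ ^ 2 + (3 + 2 * β) * σ * a + (β - 1) * (β - 2) * a ^ 2 ≠ 0 := by
  have hlin : (C σ + X * C β : K[X]) ≠ 0 := fun h => hσ (by simpa using congrArg (eval 0) h)
  have hquad : (C (σ ^ 2) + C ((3 + 2 * β) * σ) * X + C ((β - 1) * (β - 2)) * X ^ 2 : K[X]) ≠ 0 :=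
    fun h => hσ (by simpa using congrArg (eval 0) h)
  filter_upwards [eventually_atBot_eval_intCast_ne_zero hlin,
    eventually_atBot_eval_intCast_ne_zero hquad] with a h₁ h₂
  exact ⟨by simpa only [eval_add, eval_mul, eval_C, eval_X] using h₁, by simpa using h₂⟩

/-- The values at `3 a`, `4 a` and `5 a = a + 4 a = 2 a + 3 a` are eliminated. -/
theorem density_coeff_two_mul
    (h : ∀ i ≤ r, ∀ k ≤ r,
      f k * (σ + k + i * β) - f i * (σ + i + k * β) = (k - i) * f (i + k))
    {a : ℤ} (ha : a ≤ r) (ha₀ : a ≤ 0)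
    (hZ : σ ^ 2 + (3 + 2 * β) * σ * a + (β - 1) * (β - 2) * a ^ 2 ≠ 0) :
    (σ + a * β) * f (2 * a) = (σ + 2 * a * β) * f a := by
  have h₃ := h a ha (2 * a) (by omega)
  have h₄ := h a ha (3 * a) (by omega)
  have h₅ := h a ha (4 * a) (by omega)
  have h₅' := h (2 * a) (by omega) (3 * a) (by omega)
  rw [show a + 2 * a = 3 * a by ring] at h₃
  rw [show a + 3 * a = 4 * a by ring] at h₄
  rw [show a + 4 * a = 5 * a by ring] at h₅
  rw [show 2 * a + 3 * a = 5 * a by ring] at h₅'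
  push_cast at h₃ h₄ h₅ h₅'
  rw [← sub_eq_zero]
  refine (mul_eq_zero.mp ?_).resolve_left hZ
  linear_combination (-a : K) * (-2 * a * (h₅ - 3 * h₅') - (σ + 4 * a + a * β) * h₄)
    + ((σ + 4 * a + a * β) * (σ + 3 * a + a * β) - 6 * a * (σ + 3 * a + 2 * a * β)) * h₃

theorem density_coeff_succ_mul [CharZero K]
    (h : ∀ i ≤ r, ∀ k ≤ r,
      f k * (σ + k + i * β) - f i * (σ + i + k * β) = (k - i) * f (i + k))
    {a : ℤ} (ha : a ≤ r) (ha₀ : a < 0)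
    (hZ : σ ^ 2 + (3 + 2 * β) * σ * a + (β - 1) * (β - 2) * a ^ 2 ≠ 0) (n : ℕ) :
    (σ + a * β) * f ((n + 1) * a) = (σ + (n + 1) * a * β) * f a := by
  induction n with
  | zero => simp
  | succ n ih =>
    rcases eq_or_ne n 0 with rfl | hn
    · simpa [one_add_one_eq_two] using density_coeff_two_mul h ha ha₀.le hZ
    · have hstep := h a ha ((n + 1) * a) (by nlinarith)
      rw [show a + ((n : ℤ) + 1) * a = (n + 1 + 1) * a by ring] at hstep
      push_cast at hstep ⊢
      have hna : (n * a : K) ≠ 0 := mul_ne_zero (mod_cast hn) (mod_cast ha₀.ne)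
      refine mul_left_cancel₀ hna ?_
      linear_combination (-σ - a * β) * hstep + (σ + (n + 1) * a + a * β) * ih

theorem exists_eventually_eq_mul_density_coeff [CharZero K] (hσ : σ ≠ 0)
    (h : ∀ i ≤ r, ∀ k ≤ r,
      f k * (σ + k + i * β) - f i * (σ + i + k * β) = (k - i) * f (i + k)) :
    ∃ γ : K, ∀ᶠ k : ℤ in atBot, f k = γ * (σ + k * β) := by
  obtain ⟨A₀, hA₀⟩ := eventually_atBot.mp (eventually_density_coeff_ne_zero hσ β)
  obtain ⟨A, hA⟩ : ∃ A, A = min A₀ (min r (-1)) := ⟨_, rfl⟩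
  have hmul (a : ℤ) (ha : a ≤ A) (b : ℤ) (hb : b < 0) :
      (σ + a * β) * f (-b * a) = (σ - b * a * β) * f a := by
    have := density_coeff_succ_mul h (a := a) (by omega) (by omega) (hA₀ a (by omega)).2
      (-b - 1).toNat
    rw [← Int.cast_natCast (R := K), show ((-b - 1).toNat : ℤ) = -b - 1 by omega] at this
    convert this using 3
    · ring
    · push_cast
      ring
  have hne (a : ℤ) (ha : a ≤ A) : σ + a * β ≠ 0 := (hA₀ a (by omega)).1
  refine ⟨f A / (σ + A * β), eventually_atBot.mpr ⟨A, fun k hk => ?_⟩⟩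
  have hAk := hmul A le_rfl k (by omega)
  have hkA := hmul k hk A (by omega)
  have hprod := hne (-A * k) (by
    nlinarith [mul_nonneg_of_nonpos_of_nonpos (show A ≤ 0 by omega) (show k + 1 ≤ 0 by omega)])
  rw [show -k * A = -A * k by ring] at hAk
  push_cast at hprod
  rw [div_mul_eq_mul_div, eq_div_iff (hne A le_rfl)]
  refine mul_left_cancel₀ hprod ?_
  linear_combination (σ + k * β) * hAk - (σ + A * β) * hkA

end DensityFunctionalEquation

namespace QRep

variable {V : Type} [AddCommGroup V] [Module ℂ V] {ρ : QRep V} {ν β F : ℂ} {v : ℤ → V} {N : ℤ}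

section Homogeneous

theorem IsEvenSimple.eq_wt_of_invariant (hρ : ρ.IsEvenSimple) {G : ℂ → Submodule ℂ V}
    (hG : ∀ σ, G σ ≤ ρ.wt σ) (hL : ∀ (j : ℤ) σ, ∀ w ∈ G σ, ρ.L j w ∈ G (σ + j))
    (hH : ∀ (j : ℤ) σ, ∀ w ∈ G σ, ρ.H j w ∈ G (σ + j)) (hne : ∃ σ, G σ ≠ ⊥) (σ : ℂ) :
    G σ = ρ.wt σ := by
  have hinv (T : V →ₗ[ℂ] V) (j : ℤ) (hT : ∀ σ, ∀ w ∈ G σ, T w ∈ G (σ + j)) :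
      ∀ w ∈ ⨆ σ, G σ, T w ∈ ⨆ σ, G σ := by
    change ⨆ σ, G σ ≤ (⨆ σ, G σ).comap T
    exact iSup_le fun σ w hw => mem_iSup_of_mem (σ + j) (hT σ w hw)
  have htop : ⨆ σ, G σ = ⊤ := by
    refine (hρ _ (fun j => hinv _ j (hL j)) fun j => hinv _ j (hH j)).resolve_left fun h => ?_
    obtain ⟨σ, hσ⟩ := hne
    exact hσ (iSup_eq_bot.mp h σ)
  have hdisj : Disjoint (ρ.wt σ) (⨆ (τ) (_ : τ ≠ σ), G τ) :=
    (Module.End.eigenspaces_iSupIndep (ρ.L 0) σ).mono_right (iSup₂_mono fun τ _ => hG τ)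
  calc G σ = G σ ⊔ (⨆ (τ) (_ : τ ≠ σ), G τ) ⊓ ρ.wt σ := by rw [hdisj.symm.eq_bot, sup_bot_eq]
    _ = (G σ ⊔ ⨆ (τ) (_ : τ ≠ σ), G τ) ⊓ ρ.wt σ := (sup_inf_assoc_of_le _ (hG σ)).symm
    _ = ρ.wt σ := by rw [← iSup_split_single, htop, top_inf_eq]

theorem IsEvenSimple.wt_le_iSup (hρ : ρ.IsEvenSimple) {E : ℤ → Submodule ℂ V}
    (hL : ∀ i j : ℤ, ∀ w ∈ ρ.wt (ν + i) ⊓ E i, ρ.L j w ∈ E (i + j))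
    (hH : ∀ i j : ℤ, ∀ w ∈ ρ.wt (ν + i) ⊓ E i, ρ.H j w ∈ E (i + j))
    (hne : ∃ i : ℤ, ρ.wt (ν + i) ⊓ E i ≠ ⊥) (σ : ℂ) :
    ρ.wt σ ≤ ⨆ (i : ℤ) (_ : σ = ν + i), E i := by
  let G (σ : ℂ) : Submodule ℂ V := ⨆ (i : ℤ) (_ : σ = ν + i), ρ.wt σ ⊓ E i
  have hG (i : ℤ) : ρ.wt (ν + i) ⊓ E i ≤ G (ν + i) := le_iSup₂_of_le i rfl le_rfl
  have hshift (σ : ℂ) (j : ℤ) (T : V →ₗ[ℂ] V) (hT : ∀ w ∈ ρ.wt σ, T w ∈ ρ.wt (σ + j))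
      (hE : ∀ i : ℤ, ∀ w ∈ ρ.wt (ν + i) ⊓ E i, T w ∈ E (i + j)) : G σ ≤ (G (σ + j)).comap T := by
    refine iSup₂_le ?_
    rintro i rfl w hw
    have hTw := hT w hw.1
    rw [add_assoc, ← Int.cast_add] at hTw
    simpa only [Submodule.mem_comap, add_assoc, ← Int.cast_add] using hG (i + j) ⟨hTw, hE i w hw⟩
  have heq := hρ.eq_wt_of_invariant (G := G) (fun σ => iSup₂_le fun _ _ => inf_le_left)
    (fun j σ => hshift σ j _ (fun w hw => L_mem_wt hw j rfl) fun i => hL i j)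
    (fun j σ => hshift σ j _ (fun w hw => H_mem_wt hw j rfl) fun i => hH i j)
    (hne.imp' (fun i : ℤ => ν + i) fun i hi => ne_bot_of_le_ne_bot hi (hG i)) σ
  exact heq ▸ iSup₂_mono fun _ _ => inf_le_right

theorem IsEvenSimple.wt_add_intCast_le (hρ : ρ.IsEvenSimple) {E : ℤ → Submodule ℂ V}
    (hL : ∀ i j : ℤ, ∀ w ∈ ρ.wt (ν + i) ⊓ E i, ρ.L j w ∈ E (i + j))
    (hH : ∀ i j : ℤ, ∀ w ∈ ρ.wt (ν + i) ⊓ E i, ρ.H j w ∈ E (i + j))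
    (hne : ∃ i : ℤ, ρ.wt (ν + i) ⊓ E i ≠ ⊥) (i : ℤ) : ρ.wt (ν + i) ≤ E i := by
  refine (hρ.wt_le_iSup hL hH hne _).trans (iSup₂_le fun j hj => ?_)
  rw [Int.cast_injective (add_left_cancel hj)]

theorem IsEvenSimple.wt_eq_bot (hρ : ρ.IsEvenSimple) (hν : ∃ i : ℤ, ρ.wt (ν + i) ≠ ⊥) {σ : ℂ}
    (hσ : ∀ i : ℤ, σ ≠ ν + i) : ρ.wt σ = ⊥ := by
  simpa [hσ] using hρ.wt_le_iSup (ν := ν) (E := fun _ => ⊤) (by simp) (by simp) (by simpa) σ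

end Homogeneous

namespace IsDensityRay

section Globalization

theorem wt_ne_bot (hv : ρ.IsDensityRay ν β F v N) {i : ℤ} (hi : i ≤ N) : ρ.wt (ν + i) ≠ ⊥ :=
  (Submodule.ne_bot_iff _).mpr ⟨v i, hv.mem_wt i hi, hv.ne_zero i hi⟩

/-- The vectors sent into the line spanned by `v (i + k)` by `L k` and `H k`, for `k` near
`-∞`. -/
noncomputable def eventuallyInRay (ρ : QRep V) (v : ℤ → V) (i : ℤ) : Submodule ℂ V :=
  eventuallyComap ρ.L (fun k => ℂ ∙ v (i + k)) ⊓ eventuallyComap ρ.H (fun k => ℂ ∙ v (i + k))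

theorem eventually_L_mem_span (hv : ρ.IsDensityRay ν β F v N) (i j : ℤ) :
    ∀ᶠ k in atBot, ∀ x ∈ ℂ ∙ v (i + k), ρ.L j x ∈ ℂ ∙ v (i + j + k) := by
  filter_upwards [eventually_le_atBot (N - i), eventually_le_atBot (N - i - j)] with k h₁ h₂
  intro x hx
  obtain ⟨c, rfl⟩ := mem_span_singleton.mp hx
  rw [map_smul, hv.L_apply j _ (by omega) (by omega), add_right_comm i k]
  exact smul_mem _ _ (smul_mem _ _ (mem_span_singleton_self _))

theorem eventually_H_mem_span (hv : ρ.IsDensityRay ν β F v N) (i j : ℤ) :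
    ∀ᶠ k in atBot, ∀ x ∈ ℂ ∙ v (i + k), ρ.H j x ∈ ℂ ∙ v (i + j + k) := by
  filter_upwards [eventually_le_atBot (N - i), eventually_le_atBot (N - i - j)] with k h₁ h₂
  intro x hx
  obtain ⟨c, rfl⟩ := mem_span_singleton.mp hx
  rw [map_smul, hv.H_apply j _ (by omega) (by omega), add_right_comm i k]
  exact smul_mem _ _ (smul_mem _ _ (mem_span_singleton_self _))

theorem L_mem_eventuallyInRay (hv : ρ.IsDensityRay ν β F v N) {i : ℤ} (j : ℤ) {w : V}
    (hw : w ∈ eventuallyInRay ρ v i) : ρ.L j w ∈ eventuallyInRay ρ v (i + j) := by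
  obtain ⟨hL, hH⟩ := hw
  constructor
  · filter_upwards [hL, eventually_atBot_add hL j, eventually_atBot_ne_zero j,
      hv.eventually_L_mem_span i j] with k h₁ h₂ h₃ h₄
    rw [ρ.L_L_apply h₃]
    rw [add_comm k j, ← add_assoc] at *
    exact add_mem (h₄ _ h₁) (smul_mem _ _ h₂)
  · filter_upwards [hH, eventually_atBot_add hH j, hv.eventually_L_mem_span i j] with k h₁ h₂ h₃
    rw [H_L_apply]
    rw [add_comm k j, ← add_assoc] at h₂
    exact sub_mem (h₃ _ h₁) (smul_mem _ _ h₂)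

theorem H_mem_eventuallyInRay (hv : ρ.IsDensityRay ν β F v N) {i : ℤ} (j : ℤ) {w : V}
    (hw : w ∈ eventuallyInRay ρ v i) : ρ.H j w ∈ eventuallyInRay ρ v (i + j) := by
  obtain ⟨hL, hH⟩ := hw
  constructor
  · filter_upwards [hL, eventually_atBot_add hH j, hv.eventually_H_mem_span i j] with k h₁ h₂ h₃
    rw [L_H_apply]
    rw [add_comm k j, ← add_assoc] at *
    exact add_mem (h₃ _ h₁) (smul_mem _ _ h₂)
  · filter_upwards [hH, eventually_atBot_ne_zero j, hv.eventually_H_mem_span i j] with k h₁ h₂ h₃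
    rw [ρ.H_H_apply h₂]
    exact h₃ _ h₁

theorem wt_le_eventuallyInRay (hv : ρ.IsDensityRay ν β F v N) (hρ : ρ.IsEvenSimple) (i : ℤ) :
    ρ.wt (ν + i) ≤ eventuallyInRay ρ v i := by
  have hN : v N ∈ eventuallyInRay ρ v N := by
    constructor
    · filter_upwards [eventually_le_atBot 0] with k hk
      exact mem_span_singleton.mpr ⟨_, (hv.L_apply k N le_rfl (by omega)).symm⟩
    · filter_upwards [eventually_le_atBot 0] with k hk
      exact mem_span_singleton.mpr ⟨_, (hv.H_apply k N le_rfl (by omega)).symm⟩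
  exact hρ.wt_add_intCast_le (fun i j w hw => hv.L_mem_eventuallyInRay j hw.2)
    (fun i j w hw => hv.H_mem_eventuallyInRay j hw.2)
    ⟨N, (Submodule.ne_bot_iff _).mpr ⟨v N, ⟨hv.mem_wt N le_rfl, hN⟩, hv.ne_zero N le_rfl⟩⟩ i

theorem exists_L_apply_eq_smul (hv : ρ.IsDensityRay ν β F v N) (hρ : ρ.IsEvenSimple) {i : ℤ}
    {w : V} (hw : w ∈ ρ.wt (ν + i)) :
    ∃ (f : ℤ → ℂ) (r : ℤ), ∀ k ≤ r, ρ.L k w = f k • v (i + k) := by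
  obtain ⟨f, hf⟩ := Eventually.choice <|
    (hv.wt_le_eventuallyInRay hρ i hw).1.mono fun k hk => mem_span_singleton.mp hk
  exact ⟨f, (eventually_atBot.mp hf).imp fun r hr k hk => (hr k hk).symm⟩

theorem exists_H_apply_eq_smul (hv : ρ.IsDensityRay ν β F v N) (hρ : ρ.IsEvenSimple) {i : ℤ}
    {w : V} (hw : w ∈ ρ.wt (ν + i)) :
    ∃ (g : ℤ → ℂ) (r : ℤ), ∀ k ≤ r, ρ.H k w = g k • v (i + k) := by
  obtain ⟨g, hg⟩ := Eventually.choice <|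
    (hv.wt_le_eventuallyInRay hρ i hw).2.mono fun k hk => mem_span_singleton.mp hk
  exact ⟨g, (eventually_atBot.mp hg).imp fun r hr k hk => (hr k hk).symm⟩

end Globalization

section NonzeroCharge

theorem eventuallyKer_H_eq_bot (hv : ρ.IsDensityRay ν β F v N) (hρ : ρ.IsEvenSimple)
    (hF : F ≠ 0) : eventuallyKer ρ.H = ⊥ := by
  refine (hρ (eventuallyKer ρ.H) (fun j w hw => ?_) fun j w hw => ?_).resolve_right fun htop => ?_
  · filter_upwards [hw, eventually_atBot_add hw j] with k h₁ h₂
    rw [H_L_apply, h₁, add_comm j, h₂, map_zero, smul_zero, sub_zero]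
  · filter_upwards [hw, eventually_atBot_ne_zero j] with k h₁ h₂
    rw [ρ.H_H_apply h₂, h₁, map_zero]
  · have hN : v N ∈ eventuallyKer ρ.H := htop ▸ Submodule.mem_top
    obtain ⟨k, hk, hk₀⟩ := (hN.and (eventually_le_atBot 0)).exists
    rw [hv.H_apply k N le_rfl (by omega)] at hk
    exact smul_ne_zero hF (hv.ne_zero _ (by omega)) hk

theorem wt_le_eventuallyProportional_H (hv : ρ.IsDensityRay ν β F v N) (hρ : ρ.IsEvenSimple)
    (hF : F ≠ 0) (i : ℤ) :
    ρ.wt (ν + i) ≤ eventuallyProportional ρ.H fun k => v (i + k) := by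
  intro w hw
  obtain ⟨g, r, hg⟩ := hv.exists_H_apply_eq_smul hρ hw
  obtain ⟨s, hs⟩ : ∃ s, s = min r (min (N - i) (-1)) := ⟨_, rfl⟩
  refine ⟨g s, ?_⟩
  filter_upwards [eventually_le_atBot s] with k hk
  have hcomm := ρ.H_H_apply (m := k) (n := s) (by omega) w
  rw [hg k (by omega), hg s (by omega), map_smul, map_smul,
    hv.H_apply k _ (by omega) (by omega), hv.H_apply s _ (by omega) (by omega),
    add_right_comm i s k, smul_smul, smul_smul] at hcomm
  rw [hg k (by omega),
    mul_right_cancel₀ hF (smul_left_injective ℂ (hv.ne_zero _ (by omega)) hcomm)]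

end NonzeroCharge

section ZeroCharge

theorem H_eq_zero (hv : ρ.IsDensityRay ν β 0 v N) (hρ : ρ.IsEvenSimple)
    (hker : eventuallyKer ρ.L ⊓ eventuallyKer ρ.H = ⊥) (k : ℤ) (w : V) : ρ.H k w = 0 := by
  have hH {k j : ℤ} (hj : j ≤ N) (hjk : j + k ≤ N) : ρ.H k (v j) = 0 := by
    rw [hv.H_apply k j hj hjk, zero_smul]
  have hN (k : ℤ) : ρ.H k (v N) = 0 := by
    refine (Submodule.eq_bot_iff _).mp hker _ ⟨?_, ?_⟩
    · filter_upwards [eventually_le_atBot (min 0 (-k))] with i hi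
      rw [L_H_apply, hH le_rfl (by omega), hv.L_apply i N le_rfl (by omega), map_smul,
        hH (by omega) (by omega), smul_zero, smul_zero, add_zero]
    · filter_upwards [eventually_le_atBot 0, eventually_atBot_ne_zero k] with i hi hik
      rw [ρ.H_H_apply hik, hH le_rfl (by omega), map_zero]
  have htop : ⨅ k, LinearMap.ker (ρ.H k) = ⊤ := by
    refine (hρ _ (fun j w hw => ?_) fun j w hw => ?_).resolve_left fun hbot => ?_
    · simp only [Submodule.mem_iInf, LinearMap.mem_ker] at hw ⊢
      simp [H_L_apply, hw]
    · simp only [Submodule.mem_iInf, LinearMap.mem_ker] at hw ⊢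
      simp [hw]
    · exact hv.ne_zero N le_rfl ((Submodule.eq_bot_iff _).mp hbot _ (by simpa using hN))
  exact (Submodule.mem_iInf _).mp (htop ▸ Submodule.mem_top : w ∈ ⨅ k, LinearMap.ker (ρ.H k)) k

theorem wt_le_eventuallyProportional_L (hv : ρ.IsDensityRay ν β F v N) (hρ : ρ.IsEvenSimple)
    {i : ℤ} (hi : ν + i ≠ 0) :
    ρ.wt (ν + i) ≤ eventuallyProportional ρ.L fun k => (ν + i + k * β) • v (i + k) := by
  intro w hw
  obtain ⟨f, r, hf⟩ := hv.exists_L_apply_eq_smul hρ hw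
  obtain ⟨s, hs⟩ : ∃ s, s = min r (min (N - i) (-1)) := ⟨_, rfl⟩
  obtain ⟨γ, hγ⟩ := exists_eventually_eq_mul_density_coeff (f := f) (β := β) (r := s) hi
    fun a ha b hb => by
      have hcomm := ρ.L_L_apply (m := a) (n := b) (by omega) w
      rw [hf a (by omega), hf b (by omega), hf (a + b) (by omega), map_smul, map_smul,
        hv.L_apply a _ (by omega) (by omega), hv.L_apply b _ (by omega) (by omega),
        add_right_comm i b a, ← add_assoc, smul_smul, smul_smul, smul_smul, ← add_smul] at hcomm
      have := smul_left_injective ℂ (hv.ne_zero _ (by omega)) hcomm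
      push_cast at this
      linear_combination this
  refine ⟨γ, ?_⟩
  filter_upwards [hγ, eventually_le_atBot r] with k hk hkr
  rw [hf k hkr, hk, mul_smul]

theorem L_mem_eventuallyProportional (hv : ρ.IsDensityRay ν β F v N) (hρ : ρ.IsEvenSimple)
    {i j : ℤ} (hij : ν + (i + j : ℤ) = 0) {w : V} (hw : w ∈ ρ.wt (ν + i)) :
    ρ.L j w ∈ eventuallyProportional ρ.L fun k => (k : ℂ) • v (i + j + k) := by
  have hν : ν + i = -j := by
    push_cast at hij
    linear_combination hij
  rcases eq_or_ne j 0 with rfl | hj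
  · rw [QRep.mem_wt.mp hw, hν]
    simp
  obtain ⟨γ, hγ⟩ := hv.wt_le_eventuallyProportional_L hρ (i := i) (by simpa [hν] using hj) hw
  refine ⟨γ * j * β * (β - 1), ?_⟩
  filter_upwards [hγ, eventually_atBot_add hγ j, eventually_atBot_ne_zero j,
    eventually_le_atBot (N - i), eventually_le_atBot (N - i - j)] with k h₁ h₂ h₃ h₄ h₅
  rw [ρ.L_L_apply h₃, h₁, h₂, map_smul, map_smul, hv.L_apply j _ (by omega) (by omega), hν,
    show i + k + j = i + j + k by ring, show i + (k + j) = i + j + k by ring]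
  push_cast
  rw [← add_assoc, hν]
  module

theorem wt_zero_le_eventuallyProportional_L (hv : ρ.IsDensityRay ν β 0 v N)
    (hρ : ρ.IsEvenSimple) (hH : ∀ k w, ρ.H k w = 0) {i : ℤ} (hi : ν + i = 0) :
    ρ.wt (ν + i) ≤ eventuallyProportional ρ.L fun k => (k : ℂ) • v (i + k) := by
  let E (i : ℤ) : Submodule ℂ V :=
    ⨅ _ : ν + i = 0, eventuallyProportional ρ.L fun k => (k : ℂ) • v (i + k)
  refine (hρ.wt_add_intCast_le (E := E) (fun i' j w hw => ?_) (fun i' j w _ => ?_) ?_ i).trans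
    (iInf_le _ hi)
  · exact (Submodule.mem_iInf _).mpr fun h => hv.L_mem_eventuallyProportional hρ h hw.1
  · simp [hH]
  · refine ⟨min N (i - 1), ?_⟩
    have hne : ν + (min N (i - 1) : ℤ) ≠ 0 := fun h => by
      have := Int.cast_injective (add_left_cancel (hi.trans h.symm))
      omega
    simpa [E, hne] using hv.wt_ne_bot (min_le_left N (i - 1))

end ZeroCharge

theorem rank_wt_le_one (hv : ρ.IsDensityRay ν β F v N) (hρ : ρ.IsEvenSimple)
    (hker : eventuallyKer ρ.L ⊓ eventuallyKer ρ.H = ⊥) (σ : ℂ) :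
    Module.rank ℂ (ρ.wt σ) ≤ 1 := by
  by_cases hσ : ∃ i : ℤ, σ = ν + i
  · obtain ⟨i, rfl⟩ := hσ
    rcases ne_or_eq F 0 with hF | rfl
    · exact rank_le_one_of_le_eventuallyProportional (hv.wt_le_eventuallyProportional_H hρ hF i)
        (hv.eventuallyKer_H_eq_bot hρ hF)
    have hH := hv.H_eq_zero hρ hker
    have hL : eventuallyKer ρ.L = ⊥ :=
      eq_bot_iff.mpr (hker ▸ le_inf le_rfl fun w _ => .of_forall fun k => hH k w)
    rcases ne_or_eq (ν + i) 0 with hi | hi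
    · exact rank_le_one_of_le_eventuallyProportional (hv.wt_le_eventuallyProportional_L hρ hi) hL
    · exact rank_le_one_of_le_eventuallyProportional
        (hv.wt_zero_le_eventuallyProportional_L hρ hH hi) hL
  · rw [hρ.wt_eq_bot ⟨N, hv.wt_ne_bot le_rfl⟩ (not_exists.mp hσ)]
    simp

end IsDensityRay

theorem IsTail.Q_eq_zero_and_rank_wt_le_one (hν : ρ.IsTail ν) (hρ : ρ.IsSimple)
    (hcusp : ρ.Cuspidal) :
    (∀ (j : ℤ) (w : V), ρ.Q j w = 0) ∧ ∀ μ, Module.rank ℂ (ρ.wt μ) ≤ 1 := by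
  have hfin := hcusp.finiteDimensional_wt
  have hQ : ∀ (j : ℤ) (w : V), ρ.Q j w = 0 := hν.Q_eq_zero hρ
  have heven := hρ.isEvenSimple hQ
  obtain ⟨F, hF⟩ := heven.exists_H_zero_eq_smul hν.wt_ne_bot
  obtain ⟨ν', β, v, N, hν', hv⟩ := hν.exists_isDensityRay hfin hF
  exact ⟨hQ, hv.rank_wt_le_one heven (hν'.eventuallyKer_inf_eq_bot hρ)⟩

end QRep

/-- Proposition 3.4 of the paper. If `V` is a (nontrivial) simple
cuspidal weight `𝔮`-module, then the odd operators `Q_j` act by zero and every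
weight space of `V` is at most one-dimensional. -/
theorem stmt7 {V : Type} [AddCommGroup V] [Module ℂ V] (ρ : QRep V)
    (hsimple : ρ.IsSimple) (hcusp : ρ.Cuspidal) :
    (∀ (j : ℤ) (v : V), ρ.Q j v = 0) ∧
      ∀ μ : ℂ, Module.rank ℂ ↥(ρ.wt μ) ≤ 1 := by
  obtain ⟨μ, hdown | hup⟩ := QRep.exists_infinite_wt_ne_bot hsimple hcusp.1
  · obtain ⟨ν, hν⟩ := hcusp.exists_isTail hdown
    exact hν.Q_eq_zero_and_rank_wt_le_one hsimple hcusp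
  · have hdown : {n : ℕ | ρ.flip.wt (-μ - n) ≠ ⊥}.Infinite := by
      simpa only [QRep.flip_wt, neg_sub, sub_neg_eq_add, add_comm] using hup
    obtain ⟨ν, hν⟩ := hcusp.flip.exists_isTail hdown
    obtain ⟨hQ, hrank⟩ := hν.Q_eq_zero_and_rank_wt_le_one hsimple.flip hcusp.flip
    exact ⟨fun j v => by simpa only [QRep.flip, neg_neg] using hQ (-j) v,
      fun τ => neg_neg τ ▸ QRep.flip_wt (ρ := ρ) (-τ) ▸ hrank (-τ)⟩
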